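/- arXiv:2005.07056 — 4 statements merged into one kernel-verified Lean document; each statement's English description precedes it below -/
import Mathlib

section
/- Let n, r, N be positive integers with N ≥ r. Let A_1, …, A_r ∈ M_n(ℂ) be linearly independent matrices satisfying Σ_{k=1}^{r} A_kᴴ A_k = 1_n, define Φ : M_n(ℂ) → M_n(ℂ) by Φ(X) = Σ_{k=1}^{r} A_k X A_kᴴ, and define Ψ : M_n(ℂ) → M_r(ℂ) by Ψ(X)_{j,k} = Tr(A_j X A_kᴴ). Then the following are equivalent: (1) there exist unitary matrices U_1, …, U_N ∈ M_n(ℂ) and nonnegative reals p_1, …, p_N with Σ_i p_i = 1 such that Φ(X) = Σ_{i=1}^{N} p_i U_i X U_iᴴ for every X ∈ M_n(ℂ); (2) there exist a matrix V ∈ M_{N,r}(ℂ) with VᴴV = 1_r and nonzero pairwise orthogonal vectors v_1, …, v_N ∈ ℂ^N such that ⟨v_i, V Ψ(X) Vᴴ v_i⟩ = 0 for every i ∈ {1,…,N} and every X ∈ M_n(ℂ) with Tr X = 0. -/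
open Matrix BigOperators

lemma sum_functional_mul_star_expand {n : ℕ} {ι : Type*} [Fintype ι]
    (C : ι → Matrix (Fin n) (Fin n) ℂ) (f g : Matrix (Fin n) (Fin n) ℂ →ₗ[ℂ] ℂ) :
    ∑ i, f (C i) * star (g (C i)) =
      ∑ p : Fin n × Fin n, ∑ q : Fin n × Fin n,
        (f (single p.1 p.2 1) * star (g (single q.1 q.2 1))) *
          ∑ i, C i p.1 p.2 * star (C i q.1 q.2) := by
  have hf (f : Matrix (Fin n) (Fin n) ℂ →ₗ[ℂ] ℂ) (M : Matrix (Fin n) (Fin n) ℂ) :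
      f M = ∑ p : Fin n × Fin n, M p.1 p.2 * f (single p.1 p.2 1) := by
    conv_lhs => rw [matrix_eq_sum_single M]
    simp only [map_sum, Fintype.sum_prod_type]
    refine Finset.sum_congr rfl fun i _ => Finset.sum_congr rfl fun j _ => ?_
    rw [← smul_eq_mul, ← map_smul, smul_single, smul_eq_mul, mul_one]
  have hterm (i : ι) : f (C i) * star (g (C i)) = ∑ p : Fin n × Fin n, ∑ q : Fin n × Fin n,
        (f (single p.1 p.2 1) * star (g (single q.1 q.2 1))) *
          (C i p.1 p.2 * star (C i q.1 q.2)) := by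
    rw [hf f, hf g, star_sum, Finset.sum_mul_sum]
    refine Finset.sum_congr rfl fun p _ => Finset.sum_congr rfl fun q _ => ?_
    rw [star_mul']
    ring
  simp only [hterm, Finset.mul_sum]
  rw [Finset.sum_comm]
  refine Finset.sum_congr rfl fun p _ => ?_
  rw [Finset.sum_comm]

/-- Two Kraus families inducing the same map have equal sesquilinear sums of functionals. -/
lemma sum_functional_mul_star_eq {n : ℕ} {ι κ : Type*} [Fintype ι] [Fintype κ]
    (A : κ → Matrix (Fin n) (Fin n) ℂ) (B : ι → Matrix (Fin n) (Fin n) ℂ)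
    (h : ∀ X, ∑ i, B i * X * (B i)ᴴ = ∑ k, A k * X * (A k)ᴴ)
    (f g : Matrix (Fin n) (Fin n) ℂ →ₗ[ℂ] ℂ) :
    ∑ i, f (B i) * star (g (B i)) = ∑ k, f (A k) * star (g (A k)) := by
  have hentry (M : Matrix (Fin n) (Fin n) ℂ) (a b c d : Fin n) :
      (M * (single a b 1 : Matrix (Fin n) (Fin n) ℂ) * Mᴴ) c d = M c a * star (M d b) := by
    simp [Matrix.mul_apply, Matrix.single_apply, ite_and]
  have key (a b c d : Fin n) :
      ∑ i, B i c a * star (B i d b) = ∑ k, A k c a * star (A k d b) := by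
    have := congrFun (congrFun (h (single a b 1)) c) d
    simpa only [Matrix.sum_apply, hentry] using this
  rw [sum_functional_mul_star_expand A, sum_functional_mul_star_expand B]
  simp only [key]

open scoped ComplexOrder in
/-- A Kraus family inducing the same map as a linearly independent one is obtained from it by
an isometry. -/
lemma exists_isometry_of_kraus_eq {n r N : ℕ} (A : Fin r → Matrix (Fin n) (Fin n) ℂ)
    (hli : LinearIndependent ℂ A) (B : Fin N → Matrix (Fin n) (Fin n) ℂ)
    (h : ∀ X, ∑ i, B i * X * (B i)ᴴ = ∑ k, A k * X * (A k)ᴴ) :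
    ∃ W : Matrix (Fin N) (Fin r) ℂ, Wᴴ * W = 1 ∧ ∀ i, B i = ∑ j, W i j • A j := by
  obtain ⟨F, hF⟩ := LinearMap.exists_leftInverse_of_injective (Fintype.linearCombination ℂ A)
    (LinearMap.ker_eq_bot.2 hli.fintypeLinearCombination_injective)
  have hFA (k : Fin r) : F (A k) = Pi.single k 1 := by
    have := LinearMap.congr_fun hF (Pi.single k 1)
    simpa [Fintype.linearCombination_apply_single] using this
  refine ⟨Matrix.of fun i k => F (B i) k, ?_, fun i => ?_⟩
  · ext k l
    have := sum_functional_mul_star_eq A B h (LinearMap.proj l ∘ₗ F) (LinearMap.proj k ∘ₗ F)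
    simp only [LinearMap.comp_apply, LinearMap.proj_apply, hFA] at this
    rw [Matrix.mul_apply]
    simp only [conjTranspose_apply, of_apply, mul_comm (star _)]
    rw [this]
    simp [Pi.single_apply, Matrix.one_apply, eq_comm]
  · ext c d
    let P : Matrix (Fin n) (Fin n) ℂ →ₗ[ℂ] Matrix (Fin n) (Fin n) ℂ :=
      LinearMap.id - Fintype.linearCombination ℂ A ∘ₗ F
    let g : Matrix (Fin n) (Fin n) ℂ →ₗ[ℂ] ℂ := Matrix.entryLinearMap ℂ ℂ c d ∘ₗ P
    have hPA (k : Fin r) : P (A k) = 0 := by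
      simp [P, hFA, Fintype.linearCombination_apply_single]
    have hsum := sum_functional_mul_star_eq A B h g g
    have hgA (k : Fin r) : g (A k) = 0 := by simp [g, hPA]
    simp only [hgA, zero_mul, Finset.sum_const_zero] at hsum
    have hgB : g (B i) = 0 := by
      have : (fun i => g (B i)) = 0 := dotProduct_self_star_eq_zero.1 hsum
      exact congrFun this i
    have : (B i - ∑ j, F (B i) j • A j) c d = 0 := by
      simpa [g, P, Fintype.linearCombination_apply] using hgB
    exact sub_eq_zero.1 this

lemma sum_smul_mul_mul_conjTranspose {n r : ℕ} (A : Fin r → Matrix (Fin n) (Fin n) ℂ)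
    (u : Fin r → ℂ) (X : Matrix (Fin n) (Fin n) ℂ) :
    (∑ j, u j • A j) * X * (∑ j, u j • A j)ᴴ =
      ∑ j, ∑ k, (u j * star (u k)) • (A j * X * (A k)ᴴ) := by
  simp only [conjTranspose_sum, conjTranspose_smul, Finset.sum_mul, Finset.mul_sum,
    Matrix.smul_mul, Matrix.mul_smul, smul_smul]
  rw [Finset.sum_comm]
  simp only [mul_comm (star _)]

lemma trace_sum_smul_mul_mul_conjTranspose {n r : ℕ} (A : Fin r → Matrix (Fin n) (Fin n) ℂ)
    (Y : Matrix (Fin r) (Fin r) ℂ) (X : Matrix (Fin n) (Fin n) ℂ)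
    (hY : ∀ j k, Y j k = Matrix.trace (A j * X * (A k)ᴴ)) (u : Fin r → ℂ) :
    Matrix.trace ((∑ j, u j • A j) * X * (∑ j, u j • A j)ᴴ) = u ⬝ᵥ (Y *ᵥ star u) := by
  rw [sum_smul_mul_mul_conjTranspose]
  simp only [trace_sum, trace_smul, ← hY, dotProduct, mulVec, Finset.mul_sum, smul_eq_mul,
    Pi.star_apply]
  refine Finset.sum_congr rfl fun j _ => Finset.sum_congr rfl fun k _ => ?_
  ring

lemma isometry_mixing_coeff {r N : ℕ} {W : Matrix (Fin N) (Fin r) ℂ} (hW : Wᴴ * W = 1)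
    (j k : Fin r) : ∑ i, W i j * star (W i k) = if j = k then 1 else 0 := by
  have := congrFun (congrFun hW k) j
  rw [Matrix.mul_apply, Matrix.one_apply] at this
  simpa [mul_comm, eq_comm] using this

/-- Mixing a Kraus family by an isometry does not change the induced map. -/
lemma kraus_eq_of_isometry {n r N : ℕ} (A : Fin r → Matrix (Fin n) (Fin n) ℂ)
    {W : Matrix (Fin N) (Fin r) ℂ} (hW : Wᴴ * W = 1) (X : Matrix (Fin n) (Fin n) ℂ) :
    ∑ i, (∑ j, W i j • A j) * X * (∑ j, W i j • A j)ᴴ = ∑ k, A k * X * (A k)ᴴ := by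
  simp only [sum_smul_mul_mul_conjTranspose]
  rw [Finset.sum_comm]
  refine Finset.sum_congr rfl fun j _ => ?_
  rw [Finset.sum_comm]
  simp only [← Finset.sum_smul, isometry_mixing_coeff hW]
  simp

/-- A matrix annihilated by the trace pairing with traceless matrices is scalar. -/
lemma exists_eq_smul_one_of_trace_mul_eq_zero {n : ℕ} (hn : 0 < n)
    (M : Matrix (Fin n) (Fin n) ℂ)
    (h : ∀ X : Matrix (Fin n) (Fin n) ℂ, X.trace = 0 → (M * X).trace = 0) :
    M = M ⟨0, hn⟩ ⟨0, hn⟩ • (1 : Matrix (Fin n) (Fin n) ℂ) := by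
  ext a b
  by_cases hab : a = b
  · subst hab
    have := h (single a a 1 - single ⟨0, hn⟩ ⟨0, hn⟩ 1) (by simp [trace_single_eq_same])
    simpa [mul_sub, trace_mul_single, sub_eq_zero] using this
  · have := h (single b a 1) (trace_single_eq_of_ne _ _ _ (Ne.symm hab))
    simpa [trace_mul_single, Matrix.one_apply, hab] using this

open scoped ComplexOrder in
/-- A matrix whose Gram matrix is scalar is a nonnegative multiple of a unitary. -/
lemma exists_unitary_of_conjTranspose_mul_self_eq_smul {n : ℕ} (hn : 0 < n)
    (B : Matrix (Fin n) (Fin n) ℂ) (c : ℂ) (h : Bᴴ * B = c • 1) :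
    ∃ (U : Matrix (Fin n) (Fin n) ℂ) (p : ℝ), (Uᴴ * U = 1 ∧ U * Uᴴ = 1) ∧ 0 ≤ p ∧ (p : ℂ) = c ∧
      ∀ X, (p : ℂ) • (U * X * Uᴴ) = B * X * Bᴴ := by
  have hc : 0 ≤ c := by
    have h0 := (posSemidef_conjTranspose_mul_self B).diag_nonneg (i := ⟨0, hn⟩)
    simpa [h] using h0
  obtain ⟨hre, him⟩ := Complex.nonneg_iff.1 hc
  have hcre : (c.re : ℂ) = c := Complex.ext rfl (by simpa using him)
  by_cases h0 : c.re = 0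
  · have hc0 : c = 0 := by rw [← hcre, h0, Complex.ofReal_zero]
    have hB : B = 0 := conjTranspose_mul_self_eq_zero.1 (by rw [h, hc0, zero_smul])
    exact ⟨1, 0, by simp, le_rfl, by simp [hc0], by simp [hB]⟩
  · set s : ℂ := ((Real.sqrt c.re : ℝ) : ℂ) with hs
    have hss : s * s = c := by
      rw [hs, ← Complex.ofReal_mul, Real.mul_self_sqrt hre, hcre]
    have hs0 : s ≠ 0 := by
      rintro hs0
      rw [hs0, zero_mul] at hss
      exact h0 (by simp [← hss])
    have hstar : star s⁻¹ = s⁻¹ := by simp [hs]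
    have hU : (s⁻¹ • B)ᴴ * (s⁻¹ • B) = 1 := by
      rw [conjTranspose_smul, hstar, smul_mul_smul_comm, h, smul_smul, ← hss]
      field_simp
      simp
    refine ⟨s⁻¹ • B, c.re, ⟨hU, mul_eq_one_comm.1 hU⟩, hre, hcre, fun X => ?_⟩
    rw [hcre, conjTranspose_smul, hstar, Matrix.smul_mul, smul_mul_smul_comm, smul_smul, ← hss]
    field_simp
    simp

open scoped ComplexOrder in
/-- Nonzero pairwise orthogonal vectors, `N` in number, in `ℂ^N` are, up to scaling, the adjoint
rows of a unitary matrix. -/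
lemma exists_unitary_rows_of_orthogonal {N : ℕ} (v : Fin N → Fin N → ℂ) (hv : ∀ i, v i ≠ 0)
    (horth : ∀ i j, i ≠ j → star (v i) ⬝ᵥ v j = 0) :
    ∃ (Q : Matrix (Fin N) (Fin N) ℂ) (s : Fin N → ℂ), Qᴴ * Q = 1 ∧
      ∀ i, Q i = s i • star (v i) := by
  let s : Fin N → ℂ := fun i => ((Real.sqrt (star (v i) ⬝ᵥ v i).re : ℝ) : ℂ)⁻¹
  let Q : Matrix (Fin N) (Fin N) ℂ := Matrix.of fun i => s i • star (v i)
  refine ⟨Q, s, mul_eq_one_comm.1 ?_, fun i => rfl⟩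
  have hQ (i j : Fin N) : (Q * Qᴴ) i j = s i * star (s j) * (star (v i) ⬝ᵥ v j) := by
    simp only [Matrix.mul_apply, conjTranspose_apply, dotProduct, Finset.mul_sum, Q, of_apply,
      Pi.smul_apply, Pi.star_apply, smul_eq_mul, star_mul', star_star]
    exact Finset.sum_congr rfl fun k _ => by ring
  ext i j
  rw [hQ, Matrix.one_apply]
  split_ifs with hij
  · subst hij
    have hpos : 0 < star (v i) ⬝ᵥ v i := dotProduct_star_self_pos_iff.2 (hv i)
    obtain ⟨hre, him⟩ := Complex.pos_iff.1 hpos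
    have hcre : ((star (v i) ⬝ᵥ v i).re : ℂ) = star (v i) ⬝ᵥ v i :=
      Complex.ext rfl (by simpa using him)
    have hsq : ((Real.sqrt (star (v i) ⬝ᵥ v i).re : ℝ) : ℂ) *
        ((Real.sqrt (star (v i) ⬝ᵥ v i).re : ℝ) : ℂ) = star (v i) ⬝ᵥ v i := by
      rw [← Complex.ofReal_mul, Real.mul_self_sqrt hre.le, hcre]
    have hstar : star (s i) = s i := by simp [s]
    rw [hstar]
    simp only [s]
    rw [← mul_inv, hsq, inv_mul_cancel₀ hpos.ne']
  · rw [horth i j hij, mul_zero]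

/-- A channel `Φ` with linearly independent Kraus operators `A_1,…,A_r`
(and canonical complementary channel `Ψ`) is mixed unitary with mixed-unitary rank
at most `N` iff some complementary channel `X ↦ VΨ(X)Vᴴ` (for an isometry
`V ∈ M_{N,r}`) admits an orthogonal basis of trace vectors for its image of
traceless matrices. -/
theorem stmt_2 (n r N : ℕ) (hn : 0 < n) (hr : 0 < r) (hN : r ≤ N)
    (A : Fin r → Matrix (Fin n) (Fin n) ℂ)
    (hli : LinearIndependent ℂ A)
    (hsum : ∑ k, (A k)ᴴ * A k = 1)
    (Φ : Matrix (Fin n) (Fin n) ℂ → Matrix (Fin n) (Fin n) ℂ)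
    (hΦ : ∀ X, Φ X = ∑ k, A k * X * (A k)ᴴ)
    (Ψ : Matrix (Fin n) (Fin n) ℂ → Matrix (Fin r) (Fin r) ℂ)
    (hΨ : ∀ X j k, Ψ X j k = Matrix.trace (A j * X * (A k)ᴴ)) :
    (∃ (U : Fin N → Matrix (Fin n) (Fin n) ℂ) (p : Fin N → ℝ),
        (∀ i, (U i)ᴴ * U i = 1 ∧ U i * (U i)ᴴ = 1) ∧
        (∀ i, 0 ≤ p i) ∧ (∑ i, p i = 1) ∧
        (∀ X, Φ X = ∑ i, (p i : ℂ) • (U i * X * (U i)ᴴ))) ↔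
    (∃ (V : Matrix (Fin N) (Fin r) ℂ) (v : Fin N → (Fin N → ℂ)),
        Vᴴ * V = 1 ∧
        (∀ i, v i ≠ 0) ∧
        (∀ i j, i ≠ j → star (v i) ⬝ᵥ v j = 0) ∧
        (∀ (i : Fin N) (X : Matrix (Fin n) (Fin n) ℂ), Matrix.trace X = 0 →
          star (v i) ⬝ᵥ ((V * Ψ X * Vᴴ) *ᵥ v i) = 0)) := by
  have hform (V : Matrix (Fin N) (Fin r) ℂ) (w : Fin N → ℂ) (X : Matrix (Fin n) (Fin n) ℂ) :
      star w ⬝ᵥ ((V * Ψ X * Vᴴ) *ᵥ w) =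
        ((∑ j, (star w ᵥ* V) j • A j) * X * (∑ j, (star w ᵥ* V) j • A j)ᴴ).trace := by
    rw [trace_sum_smul_mul_mul_conjTranspose A (Ψ X) X (hΨ X), star_vecMul, star_star,
      ← mulVec_mulVec, ← mulVec_mulVec, dotProduct_mulVec]
  constructor
  · rintro ⟨U, p, hU, hp, -, hUp⟩
    have hmul (i : Fin N) (X : Matrix (Fin n) (Fin n) ℂ) :
        (((Real.sqrt (p i) : ℝ) : ℂ) • U i) * X * (((Real.sqrt (p i) : ℝ) : ℂ) • U i)ᴴ =
          (p i : ℂ) • (U i * X * (U i)ᴴ) := by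
      rw [conjTranspose_smul, Matrix.smul_mul, smul_mul_smul_comm, Complex.star_def,
        Complex.conj_ofReal, ← Complex.ofReal_mul, Real.mul_self_sqrt (hp i)]
    obtain ⟨W, hW, hB⟩ := exists_isometry_of_kraus_eq A hli
      (fun i => ((Real.sqrt (p i) : ℝ) : ℂ) • U i) fun X => by
        simp only [hmul, ← hUp, hΦ]
    refine ⟨W, fun i => Pi.single i 1, hW, fun i => by simp, fun i j hij => ?_,
      fun i X hX => ?_⟩
    · simp [hij]
    · have hrow : star (Pi.single i 1 : Fin N → ℂ) ᵥ* W = W i := by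
        ext j
        simp
      rw [hform, hrow, ← hB i, hmul, trace_smul, trace_mul_comm, ← mul_assoc, (hU i).1, one_mul,
        hX, smul_zero]
  · rintro ⟨V, v, hV, hv, horth, htr⟩
    obtain ⟨Q, s, hQ, hQs⟩ := exists_unitary_rows_of_orthogonal v hv horth
    have hW : (Q * V)ᴴ * (Q * V) = 1 := by
      rw [conjTranspose_mul, Matrix.mul_assoc, ← Matrix.mul_assoc Qᴴ, hQ, Matrix.one_mul, hV]
    let B : Fin N → Matrix (Fin n) (Fin n) ℂ := fun i => ∑ j, (Q * V) i j • A j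
    have hBs (i : Fin N) : B i = s i • ∑ j, (star (v i) ᵥ* V) j • A j := by
      have hrow (j : Fin r) : (Q * V) i j = s i * (star (v i) ᵥ* V) j := by
        rw [Matrix.mul_apply_eq_vecMul, hQs, smul_vecMul, Pi.smul_apply, smul_eq_mul]
      simp only [B, hrow, Finset.smul_sum, smul_smul]
    have hscalar (i : Fin N) : ∃ c : ℂ, (B i)ᴴ * B i = c • 1 := by
      refine ⟨_, exists_eq_smul_one_of_trace_mul_eq_zero hn _ fun X hX => ?_⟩
      rw [Matrix.mul_assoc, trace_mul_comm, hBs, conjTranspose_smul, Matrix.smul_mul,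
        smul_mul_smul_comm, trace_smul, ← hform, htr i X hX, smul_zero]
    choose c hc using hscalar
    choose U p hU hp hpc hUB using fun i =>
      exists_unitary_of_conjTranspose_mul_self_eq_smul hn (B i) (c i) (hc i)
    refine ⟨U, p, hU, hp, ?_, fun X => ?_⟩
    · have htrace : ∑ i, (B i * 1 * (B i)ᴴ).trace = (n : ℂ) := by
        rw [← trace_sum, kraus_eq_of_isometry A hW, trace_sum]
        simp only [Matrix.mul_one, trace_mul_comm (A _)]
        rw [← trace_sum, hsum, trace_one, Fintype.card_fin]
      simp only [Matrix.mul_one, trace_mul_comm (B _), hc, ← hpc, trace_smul, trace_one,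
        Fintype.card_fin, smul_eq_mul, ← Finset.sum_mul] at htrace
      have hn0 : (n : ℂ) ≠ 0 := Nat.cast_ne_zero.2 hn.ne'
      exact_mod_cast mul_right_cancel₀ hn0 (htrace.trans (one_mul _).symm)
    · simp only [hUB]
      rw [hΦ, kraus_eq_of_isometry A hW]
end

section
/- Let n, r, p be positive integers, let A_1, …, A_r ∈ M_n(ℂ) be linearly independent matrices satisfying Σ_{k=1}^{r} A_kᴴ A_k = 1_n, define Φ(X) = Σ_{k=1}^{r} A_k X A_kᴴ, and define Ψ : M_n(ℂ) → M_r(ℂ) by Ψ(X)_{j,k} = Tr(A_j X A_kᴴ). Let m_1, …, m_p and n_1, …, n_p be positive integers with m_ℓ ≥ n_ℓ for each ℓ, set N = m_1 n_1 + ⋯ + m_p n_p, and index ℂ^N by triples (ℓ, a, b) with ℓ ∈ {1,…,p}, a ∈ {1,…,m_ℓ}, b ∈ {1,…,n_ℓ}. Suppose V ∈ M_{N,r}(ℂ) satisfies VᴴV = 1_r and suppose that for every X ∈ M_n(ℂ) the matrix V Ψ(X) Vᴴ has block form ⊕_{ℓ=1}^{p} (1_{m_ℓ} ⊗ Y_ℓ(X))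 for some Y_ℓ(X) ∈ M_{n_ℓ}(ℂ); that is, (V Ψ(X) Vᴴ)((ℓ,a,b),(ℓ',a',b')) = 0 unless ℓ = ℓ' and a = a', and its value when ℓ = ℓ' and a = a' does not depend on a. Then there exist unitary matrices U_1, …, U_N ∈ M_n(ℂ) and nonnegative reals p_1, …, p_N with Σ_i p_i = 1 such that Φ(X) = Σ_{i=1}^{N} p_i U_i X U_iᴴ for every X ∈ M_n(ℂ). -/
open Matrix BigOperators

lemma IsPrimitiveRoot.star_pow_mul_pow_self {k : ℕ} {ζ : ℂ} (hζ : IsPrimitiveRoot ζ k) (hk : k ≠ 0)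
    (t : ℕ) : star (ζ ^ t) * ζ ^ t = 1 := by
  rw [star_pow, ← mul_pow, mul_comm, Complex.star_def, Complex.mul_conj', hζ.norm'_eq_one hk]
  simp

/-- Orthogonality of the characters of a finite cyclic group. -/
lemma sum_star_pow_mul_pow {k : ℕ} {ζ : ℂ} (hζ : IsPrimitiveRoot ζ k) {x y : ℕ}
    (hx : x < k) (hy : y < k) :
    ∑ i : Fin k, star (ζ ^ (i.val * x)) * ζ ^ (i.val * y) = if x = y then (k : ℂ) else 0 := by
  have hk : k ≠ 0 := by omega
  have hx1 : star ζ ^ x * ζ ^ x = 1 := by rw [← star_pow, hζ.star_pow_mul_pow_self hk]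
  set η := star ζ ^ x * ζ ^ y with hη
  have hterm : ∀ i : Fin k, star (ζ ^ (i.val * x)) * ζ ^ (i.val * y) = η ^ i.val := by
    intro i
    rw [hη, star_pow, mul_pow, ← pow_mul, ← pow_mul, mul_comm x, mul_comm y]
  rw [Finset.sum_congr rfl fun i _ => hterm i, Fin.sum_univ_eq_sum_range (fun i => η ^ i)]
  split_ifs with h
  · subst h
    rw [hη, hx1]
    simp
  · have hne : η ≠ 1 := by
      intro h1
      apply h
      apply hζ.pow_inj hx hy
      calc ζ ^ x = ζ ^ x * η := by rw [h1, mul_one]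
        _ = (star ζ ^ x * ζ ^ x) * ζ ^ y := by rw [hη]; ring
        _ = ζ ^ y := by rw [hx1, one_mul]
    have hpow : η ^ k = 1 := by
      rw [hη, mul_pow, ← pow_mul, ← pow_mul, mul_comm x, mul_comm y, pow_mul, pow_mul,
        ← star_pow, hζ.pow_eq_one]
      simp
    rw [geom_sum_eq hne, hpow]
    simp

/-- The disjoint union over `ℓ` of `Fin (m ℓ) × Fin (d ℓ)` indexes a square matrix with orthonormal
columns each of whose rows, cut into blocks of size `m ℓ × d ℓ`, consists of scaled isometries. -/
lemma exists_unitary_rows_block_isometry {p : ℕ} (m d : Fin p → ℕ) (hm : ∀ ℓ, 0 < m ℓ)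
    (hd : ∀ ℓ, d ℓ ≤ m ℓ) (hN : ∑ ℓ, m ℓ * d ℓ ≠ 0) :
    ∃ W : Matrix ((ℓ : Fin p) × (Fin (m ℓ) × Fin (d ℓ)))
        ((ℓ : Fin p) × (Fin (m ℓ) × Fin (d ℓ))) ℂ,
      Wᴴ * W = 1 ∧ ∀ i ℓ (b b' : Fin (d ℓ)),
        ∑ a, star (W i ⟨ℓ, a, b'⟩) * W i ⟨ℓ, a, b⟩ =
          if b' = b then (m ℓ : ℂ) / ((∑ ℓ, m ℓ * d ℓ : ℕ) : ℂ) else 0 := by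
  set N := ∑ ℓ, m ℓ * d ℓ
  let e : ((ℓ : Fin p) × (Fin (m ℓ) × Fin (d ℓ))) ≃ Fin N :=
    (Equiv.sigmaCongrRight fun _ => finProdFinEquiv).trans finSigmaFinEquiv
  obtain ⟨off, hoff⟩ : ∃ off : Fin p → ℕ, ∀ ℓ (a : Fin (m ℓ)) (b : Fin (d ℓ)),
      (e ⟨ℓ, a, b⟩ : ℕ) = off ℓ + d ℓ * a + b := by
    refine ⟨fun ℓ => ∑ i : Fin ℓ, m (Fin.castLE ℓ.2.le i) * d (Fin.castLE ℓ.2.le i), ?_⟩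
    intro ℓ a b
    refine (finSigmaFinEquiv_apply (n := fun ℓ => m ℓ * d ℓ) ⟨ℓ, finProdFinEquiv (a, b)⟩).trans ?_
    rw [finProdFinEquiv_apply_val]
    ring
  have hζ := Complex.isPrimitiveRoot_exp N hN
  set ζ := Complex.exp (2 * Real.pi * Complex.I / N)
  have hω := fun ℓ => Complex.isPrimitiveRoot_exp (m ℓ) (hm ℓ).ne'
  set ω : Fin p → ℂ := fun ℓ => Complex.exp (2 * Real.pi * Complex.I / m ℓ)
  have hNC : (N : ℂ) ≠ 0 := Nat.cast_ne_zero.mpr hN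
  set s : ℂ := Complex.ofReal (Real.sqrt N)⁻¹
  have hs : star s * s = 1 / N := by
    simp only [s, Complex.star_def, Complex.conj_ofReal]
    rw [← Complex.ofReal_mul, ← mul_inv, Real.mul_self_sqrt (Nat.cast_nonneg N)]
    simp
  refine ⟨of fun i j => s * (ζ ^ ((e i : ℕ) * (e j : ℕ)) * ω j.1 ^ ((j.2.1 : ℕ) * (j.2.2 : ℕ))),
    ?_, ?_⟩
  · ext j j'
    have hchar := sum_star_pow_mul_pow hζ (e j).2 (e j').2
    rw [← Equiv.sum_comp e] at hchar
    rw [mul_apply, one_apply]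
    simp only [conjTranspose_apply, of_apply]
    set u := ω j.1 ^ ((j.2.1 : ℕ) * (j.2.2 : ℕ))
    set v := ω j'.1 ^ ((j'.2.1 : ℕ) * (j'.2.2 : ℕ))
    calc _ = star s * s * (star u * v) *
          ∑ i, star (ζ ^ ((e i : ℕ) * (e j : ℕ))) * ζ ^ ((e i : ℕ) * (e j' : ℕ)) := by
            rw [Finset.mul_sum]
            refine Finset.sum_congr rfl fun i _ => ?_
            rw [star_mul', star_mul']
            ring
      _ = _ := by
            rw [hchar, hs]
            by_cases h : j = j'
            · subst h
              have huv : star u * v = 1 := (hω j.1).star_pow_mul_pow_self (hm j.1).ne' _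
              rw [huv]
              simp [hNC]
            · have : (e j : ℕ) ≠ e j' := fun h' => h (e.injective (Fin.ext h'))
              simp [h, this]
  · intro i ℓ b b'
    have hchar := sum_star_pow_mul_pow (hω ℓ) (b'.2.trans_le (hd ℓ)) (b.2.trans_le (hd ℓ))
    obtain ⟨t, ht⟩ : ∃ t, (e i : ℕ) = t := ⟨_, rfl⟩
    calc _ = star s * s * (star (ζ ^ (t * b')) * ζ ^ (t * b)) *
          ∑ a : Fin (m ℓ), star (ω ℓ ^ ((a : ℕ) * b')) * ω ℓ ^ ((a : ℕ) * b) := by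
            rw [Finset.mul_sum]
            refine Finset.sum_congr rfl fun a _ => ?_
            have h1 := hζ.star_pow_mul_pow_self hN (t * (off ℓ + d ℓ * a))
            rw [of_apply, of_apply, ht, hoff, hoff, mul_add t _ (b : ℕ), mul_add t _ (b' : ℕ),
              pow_add, pow_add, star_mul', star_mul', star_mul']
            linear_combination (star s * s * star (ζ ^ (t * b')) * ζ ^ (t * b) *
              star (ω ℓ ^ ((a : ℕ) * b')) * ω ℓ ^ ((a : ℕ) * b)) * h1
      _ = _ := by
            rw [hchar, hs]
            by_cases h : b' = b
            · subst h
              rw [hζ.star_pow_mul_pow_self hN]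
              simp only [if_true]
              ring
            · have : (b' : ℕ) ≠ b := fun h' => h (Fin.ext h')
              simp [h, this]

/-- The family of operators obtained by mixing `A` with the coefficients `W`. -/
def krausMix {ι κ n : Type*} [Fintype κ] (W : Matrix ι κ ℂ) (A : κ → Matrix n n ℂ) (i : ι) :
    Matrix n n ℂ :=
  ∑ k, W i k • A k

section krausMix

variable {ι κ n : Type*} [Fintype κ]

lemma krausMix_mul_mul [Fintype n] (W : Matrix ι κ ℂ) (A : κ → Matrix n n ℂ) (X : Matrix n n ℂ)
    (i j : ι) :
    krausMix W A i * X * (krausMix W A j)ᴴ =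
      ∑ k, ∑ l, (W i k * star (W j l)) • (A k * X * (A l)ᴴ) := by
  simp only [krausMix, conjTranspose_sum, conjTranspose_smul, Finset.sum_mul, Finset.mul_sum,
    Matrix.smul_mul, Matrix.mul_smul, smul_smul]
  rw [Finset.sum_comm]
  simp only [mul_comm]

lemma conjTranspose_krausMix_mul [Fintype n] (W : Matrix ι κ ℂ) (A : κ → Matrix n n ℂ) (i j : ι) :
    (krausMix W A i)ᴴ * krausMix W A j =
      ∑ k, ∑ l, (star (W i k) * W j l) • ((A k)ᴴ * A l) := by
  simp only [krausMix, conjTranspose_sum, conjTranspose_smul, Finset.sum_mul, Finset.mul_sum,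
    Matrix.smul_mul, Matrix.mul_smul, smul_smul]
  rw [Finset.sum_comm]
  simp only [mul_comm]

lemma sum_sum_sum_smul_of_isometry [Fintype ι] [DecidableEq κ] {W : Matrix ι κ ℂ} (hW : Wᴴ * W = 1)
    (f : κ → κ → Matrix n n ℂ) :
    ∑ i, ∑ k, ∑ l, (star (W i k) * W i l) • f k l = ∑ k, f k k := by
  rw [Finset.sum_comm]
  refine Finset.sum_congr rfl fun k _ => ?_
  rw [Finset.sum_comm]
  have h : ∀ l, ∑ i, star (W i k) * W i l = (1 : Matrix κ κ ℂ) k l := fun l => by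
    rw [← hW]
    rfl
  simp only [← Finset.sum_smul, h, one_apply, ite_smul, one_smul, zero_smul,
    Finset.sum_ite_eq, Finset.mem_univ, if_true]

lemma sum_krausMix_mul_mul [Fintype ι] [DecidableEq κ] [Fintype n]
    {W : Matrix ι κ ℂ} (hW : Wᴴ * W = 1) (A : κ → Matrix n n ℂ)
    (X : Matrix n n ℂ) :
    ∑ i, krausMix W A i * X * (krausMix W A i)ᴴ = ∑ k, A k * X * (A k)ᴴ := by
  rw [← sum_sum_sum_smul_of_isometry hW fun k l => A l * X * (A k)ᴴ]
  refine Finset.sum_congr rfl fun i _ => ?_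
  rw [krausMix_mul_mul, Finset.sum_comm]
  simp only [mul_comm]

lemma sum_conjTranspose_krausMix_mul [Fintype ι] [DecidableEq κ] [Fintype n]
    {W : Matrix ι κ ℂ} (hW : Wᴴ * W = 1)
    (A : κ → Matrix n n ℂ) :
    ∑ i, (krausMix W A i)ᴴ * krausMix W A i = ∑ k, (A k)ᴴ * A k := by
  rw [← sum_sum_sum_smul_of_isometry hW fun k l => (A k)ᴴ * A l]
  exact Finset.sum_congr rfl fun i _ => conjTranspose_krausMix_mul W A i i

end krausMix

/-- If the image of the canonical complementary channel `X ↦ VΨ(X)Vᴴ`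
(`V` an isometry into `M_N` with `N = m₁n₁ + ⋯ + m_pn_p`, indexed by triples
`(ℓ,a,b)`) lies in the von Neumann algebra
`(1_{m₁} ⊗ M_{n₁}) ⊕ ⋯ ⊕ (1_{m_p} ⊗ M_{n_p})` with `m_ℓ ≥ n_ℓ`, then `Φ` is
mixed unitary with mixed-unitary rank at most `N`. -/
theorem stmt_3 (n r p : ℕ) (hn : 0 < n) (hr : 0 < r) (hp : 0 < p)
    (m nn : Fin p → ℕ) (hm : ∀ ℓ, 0 < m ℓ) (hnn : ∀ ℓ, 0 < nn ℓ)
    (hmn : ∀ ℓ, nn ℓ ≤ m ℓ)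
    (A : Fin r → Matrix (Fin n) (Fin n) ℂ)
    (hli : LinearIndependent ℂ A)
    (hsum : ∑ k, (A k)ᴴ * A k = 1)
    (Φ : Matrix (Fin n) (Fin n) ℂ → Matrix (Fin n) (Fin n) ℂ)
    (hΦ : ∀ X, Φ X = ∑ k, A k * X * (A k)ᴴ)
    (Ψ : Matrix (Fin n) (Fin n) ℂ → Matrix (Fin r) (Fin r) ℂ)
    (hΨ : ∀ X j k, Ψ X j k = Matrix.trace (A j * X * (A k)ᴴ))
    (V : Matrix ((ℓ : Fin p) × (Fin (m ℓ) × Fin (nn ℓ))) (Fin r) ℂ)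
    (hV : Vᴴ * V = 1)
    (hblock : ∀ X : Matrix (Fin n) (Fin n) ℂ,
      ∃ Y : (ℓ : Fin p) → Matrix (Fin (nn ℓ)) (Fin (nn ℓ)) ℂ,
        ∀ i i' : (ℓ : Fin p) × (Fin (m ℓ) × Fin (nn ℓ)),
          (V * Ψ X * Vᴴ) i i' =
            if h : i.1 = i'.1 then
              (if Fin.cast (congrArg m h) i.2.1 = i'.2.1 then
                Y i'.1 (Fin.cast (congrArg nn h) i.2.2) i'.2.2
              else 0)
            else 0) :
    ∃ (U : ((ℓ : Fin p) × (Fin (m ℓ) × Fin (nn ℓ))) → Matrix (Fin n) (Fin n) ℂ)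
      (q : ((ℓ : Fin p) × (Fin (m ℓ) × Fin (nn ℓ))) → ℝ),
        (∀ i, (U i)ᴴ * U i = 1 ∧ U i * (U i)ᴴ = 1) ∧
        (∀ i, 0 ≤ q i) ∧ (∑ i, q i = 1) ∧
        (∀ X, Φ X = ∑ i, (q i : ℂ) • (U i * X * (U i)ᴴ)) := by
  have hN : ∑ ℓ, m ℓ * nn ℓ ≠ 0 := by
    have h := Finset.single_le_sum (f := fun ℓ => m ℓ * nn ℓ) (fun _ _ => Nat.zero_le _)
      (Finset.mem_univ (⟨0, hp⟩ : Fin p))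
    have h' := Nat.mul_pos (hm ⟨0, hp⟩) (hnn ⟨0, hp⟩)
    omega
  obtain ⟨W, hW, hWblock⟩ := exists_unitary_rows_block_isometry m nn hm hmn hN
  have hcard : (∑ _i : (ℓ : Fin p) × (Fin (m ℓ) × Fin (nn ℓ)), (1 : ℝ)) =
      ((∑ ℓ, m ℓ * nn ℓ : ℕ) : ℝ) := by
    simp [Fintype.card_sigma]
  set N := ∑ ℓ, m ℓ * nn ℓ
  have hNR : (N : ℝ) ≠ 0 := Nat.cast_ne_zero.mpr hN
  have hNC : (N : ℂ) ≠ 0 := Nat.cast_ne_zero.mpr hN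
  set B := krausMix V A with hB
  have hBsum : ∑ i, (B i)ᴴ * B i = 1 := (sum_conjTranspose_krausMix_mul hV A).trans hsum
  have htrace : ∀ X i j, (V * Ψ X * Vᴴ) i j = trace ((B j)ᴴ * B i * X) := by
    intro X i j
    rw [← trace_mul_cycle, hB, krausMix_mul_mul, trace_sum]
    simp only [trace_sum, trace_smul, ← hΨ, mul_apply, conjTranspose_apply, Finset.sum_mul,
      smul_eq_mul]
    rw [Finset.sum_comm]
    refine Finset.sum_congr rfl fun k _ => Finset.sum_congr rfl fun l _ => ?_
    ring
  have hzero : ∀ ℓ ℓ' a a' b b', (⟨ℓ, a⟩ : (ℓ : Fin p) × Fin (m ℓ)) ≠ ⟨ℓ', a'⟩ →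
      (B ⟨ℓ', a', b'⟩)ᴴ * B ⟨ℓ, a, b⟩ = 0 := by
    intro ℓ ℓ' a a' b b' hne
    rw [ext_iff_trace_mul_right]
    intro X
    obtain ⟨Y, hY⟩ := hblock X
    rw [← htrace, hY, Matrix.zero_mul, trace_zero]
    by_cases h : ℓ = ℓ'
    · subst h
      have ha : a ≠ a' := fun h => hne (by rw [h])
      simp [ha]
    · simp [h]
  have hindep : ∀ ℓ a a' b b', (B ⟨ℓ, a, b'⟩)ᴴ * B ⟨ℓ, a, b⟩ =
      (B ⟨ℓ, a', b'⟩)ᴴ * B ⟨ℓ, a', b⟩ := by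
    intro ℓ a a' b b'
    rw [ext_iff_trace_mul_right]
    intro X
    obtain ⟨Y, hY⟩ := hblock X
    rw [← htrace, ← htrace, hY, hY]
    simp
  set D := krausMix W B
  have hD : ∀ i, (D i)ᴴ * D i = (1 / N : ℂ) • 1 := by
    intro i
    let C : (ℓ : Fin p) → Fin (nn ℓ) → Fin (nn ℓ) → Matrix (Fin n) (Fin n) ℂ :=
      fun ℓ b' b => (B ⟨ℓ, ⟨0, hm ℓ⟩, b'⟩)ᴴ * B ⟨ℓ, ⟨0, hm ℓ⟩, b⟩
    have hC : ∀ ℓ a b' b, (B ⟨ℓ, a, b'⟩)ᴴ * B ⟨ℓ, a, b⟩ = C ℓ b' b :=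
      fun ℓ a b' b => hindep ℓ a _ b b'
    have hCsum : ∑ ℓ, ∑ b, (m ℓ : ℂ) • C ℓ b b = 1 := by
      rw [← hBsum, Fintype.sum_sigma]
      refine Finset.sum_congr rfl fun ℓ _ => ?_
      rw [Fintype.sum_prod_type_right]
      simp only [hC, Finset.sum_const, Finset.card_univ, Fintype.card_fin, Nat.cast_smul_eq_nsmul]
    have hrow : ∀ ℓ a b', ∑ j, (star (W i ⟨ℓ, a, b'⟩) * W i j) • ((B ⟨ℓ, a, b'⟩)ᴴ * B j) =
        ∑ b, (star (W i ⟨ℓ, a, b'⟩) * W i ⟨ℓ, a, b⟩) • C ℓ b' b := by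
      intro ℓ a b'
      rw [Fintype.sum_sigma, Finset.sum_eq_single ℓ, Fintype.sum_prod_type,
        Finset.sum_eq_single a]
      · simp only [hC]
      · intro a' _ ha'
        refine Finset.sum_eq_zero fun b _ => ?_
        rw [hzero _ _ _ _ _ _ (by simpa using ha'), smul_zero]
      · simp
      · intro ℓ' _ hℓ'
        refine Finset.sum_eq_zero fun ab _ => ?_
        rw [hzero _ _ _ _ _ _ fun h => hℓ' (congrArg Sigma.fst h), smul_zero]
      · simp
    rw [conjTranspose_krausMix_mul, ← hCsum, Fintype.sum_sigma, Finset.smul_sum]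
    refine Finset.sum_congr rfl fun ℓ _ => ?_
    rw [Fintype.sum_prod_type_right, Finset.smul_sum]
    refine Finset.sum_congr rfl fun b' _ => ?_
    simp only [hrow]
    rw [Finset.sum_comm]
    simp only [← Finset.sum_smul, hWblock, ite_smul, zero_smul, Finset.sum_ite_eq,
      Finset.mem_univ, if_true, smul_smul]
    congr 1
    ring
  have hsq : ((Real.sqrt N : ℝ) : ℂ) * ((Real.sqrt N : ℝ) : ℂ) = N := by
    rw [← Complex.ofReal_mul, Real.mul_self_sqrt (Nat.cast_nonneg N), Complex.ofReal_natCast]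
  refine ⟨fun i => ((Real.sqrt N : ℝ) : ℂ) • D i, fun _ => 1 / N, ?_, ?_, ?_, ?_⟩
  · intro i
    have h : (((Real.sqrt N : ℝ) : ℂ) • D i)ᴴ * (((Real.sqrt N : ℝ) : ℂ) • D i) = 1 := by
      rw [conjTranspose_smul, Matrix.smul_mul, Matrix.mul_smul, smul_smul, hD, smul_smul,
        Complex.star_def, Complex.conj_ofReal, hsq, mul_one_div_cancel hNC, one_smul]
    exact ⟨h, mul_eq_one_comm.mp h⟩
  · intro i
    positivity
  · rw [← mul_one (1 / (N : ℝ)), ← Finset.mul_sum, hcard, one_div_mul_cancel hNR]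
  · intro X
    rw [hΦ, ← sum_krausMix_mul_mul hV, ← sum_krausMix_mul_mul hW]
    refine Finset.sum_congr rfl fun i _ => ?_
    rw [conjTranspose_smul, Matrix.smul_mul, Matrix.smul_mul, Matrix.mul_smul, smul_smul, smul_smul,
      Complex.star_def, Complex.conj_ofReal, mul_assoc (_ : ℂ), hsq]
    push_cast
    rw [one_div_mul_cancel hNC, one_smul]
end

section
/- Let G be a finite group, let d be a positive integer, and let ρ : G → U(d) be a group homomorphism into the group of d×d complex unitary matrices. Let N be the complex dimension of the linear span of the set of matrices {ρ(g) : g ∈ G} in M_d(ℂ). Then there exist unitary matrices U_1, …, U_N ∈ M_d(ℂ) and nonnegative reals p_1, …, p_N with Σ_k p_k = 1 such that (1/|G|) Σ_{g ∈ G} ρ(g) X ρ(g)ᴴ = Σ_{k=1}^{N} p_k U_k X U_kᴴ for every X ∈ M_d(ℂ). -/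
open Matrix BigOperators

theorem IsPrimitiveRoot.sum_pow_mul_star_pow {n : ℕ} {ζ : ℂ} (hζ : IsPrimitiveRoot ζ n)
    (a b : Fin n) :
    ∑ k : Fin n, ζ ^ ((k : ℕ) * (a : ℕ)) * star (ζ ^ ((k : ℕ) * (b : ℕ))) =
      if a = b then (n : ℂ) else 0 := by
  have hn : n ≠ 0 := (Fin.pos a).ne'
  have hstar : star ζ = ζ⁻¹ := (Complex.inv_eq_conj (hζ.norm'_eq_one hn)).symm
  have hζ0 : ζ ≠ 0 := hζ.ne_zero hn
  have hterm (k : Fin n) : ζ ^ ((k : ℕ) * (a : ℕ)) * star (ζ ^ ((k : ℕ) * (b : ℕ))) =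
      (ζ ^ (a : ℕ) / ζ ^ (b : ℕ)) ^ (k : ℕ) := by
    rw [star_pow, hstar, inv_pow, div_pow, ← pow_mul, ← pow_mul, mul_comm (a : ℕ),
      mul_comm (b : ℕ), div_eq_mul_inv]
  simp_rw [hterm]
  rw [Fin.sum_univ_eq_sum_range (fun k => (ζ ^ (a : ℕ) / ζ ^ (b : ℕ)) ^ k)]
  split_ifs with hab
  · subst hab
    simp [div_self (pow_ne_zero (a : ℕ) hζ0)]
  · have hne : ζ ^ (a : ℕ) / ζ ^ (b : ℕ) ≠ 1 := by
      rw [Ne, div_eq_one_iff_eq (pow_ne_zero _ hζ0)]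
      exact fun h => hab (Fin.ext (hζ.pow_inj a.2 b.2 h))
    rw [geom_sum_eq hne, div_pow, ← pow_mul, ← pow_mul, mul_comm (a : ℕ), mul_comm (b : ℕ),
      pow_mul, pow_mul, hζ.pow_eq_one]
    simp

open scoped MatrixOrder ComplexOrder Matrix.Norms.L2Operator in
open scoped MatrixOrder ComplexOrder Matrix.Norms.L2Operator in
open scoped MatrixOrder ComplexOrder Matrix.Norms.L2Operator in
open scoped MatrixOrder ComplexOrder Matrix.Norms.L2Operator in
theorem Matrix.exists_units_conj_conjTranspose {G m : Type*} [Group G] [Finite G] [Fintype m]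
    [DecidableEq m] (τ : G →* Matrix m m ℂ) :
    ∃ S : (Matrix m m ℂ)ˣ, ∀ g,
      ((S : Matrix m m ℂ) * τ g * ((S⁻¹ : (Matrix m m ℂ)ˣ) : Matrix m m ℂ))ᴴ =
        (S : Matrix m m ℂ) * τ g⁻¹ * ((S⁻¹ : (Matrix m m ℂ)ˣ) : Matrix m m ℂ) := by
  classical
  have := Fintype.ofFinite G
  set P : Matrix m m ℂ := ∑ g, (τ g)ᴴ * τ g with hP
  have hPpos : P.PosDef := by
    rw [hP, ← Finset.add_sum_erase _ _ (Finset.mem_univ (1 : G))]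
    refine PosDef.add_posSemidef (by simpa using PosDef.one) ?_
    exact posSemidef_sum _ fun g _ => posSemidef_conjTranspose_mul_self _
  have hinv (g : G) : (τ g)ᴴ * P = P * τ g⁻¹ := by
    have h1 : (τ g)ᴴ * P * τ g = P := by
      simp only [hP, Finset.mul_sum, Finset.sum_mul]
      rw [← Equiv.sum_comp (Equiv.mulRight g) fun h => (τ h)ᴴ * τ h]
      simp [mul_assoc]
    calc (τ g)ᴴ * P = (τ g)ᴴ * P * (τ g * τ g⁻¹) := by simp [← map_mul]
      _ = P * τ g⁻¹ := by rw [← mul_assoc, h1]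
  obtain ⟨T, hT, hPT⟩ := CStarAlgebra.isStrictlyPositive_iff_eq_star_mul_self.mp
    hPpos.isStrictlyPositive
  obtain ⟨S, rfl⟩ := hT
  refine ⟨S, fun g => ?_⟩
  have h := hinv g
  rw [hPT, star_eq_conjTranspose] at h
  have hS : ((S⁻¹ : (Matrix m m ℂ)ˣ) : Matrix m m ℂ)ᴴ * (S : Matrix m m ℂ)ᴴ = 1 := by
    rw [← conjTranspose_mul]; simp
  calc ((S : Matrix m m ℂ) * τ g * ((S⁻¹ : (Matrix m m ℂ)ˣ) : Matrix m m ℂ))ᴴ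
      = ((S⁻¹ : (Matrix m m ℂ)ˣ) : Matrix m m ℂ)ᴴ *
          ((τ g)ᴴ * ((S : Matrix m m ℂ)ᴴ * S)) * ((S⁻¹ : (Matrix m m ℂ)ˣ) : Matrix m m ℂ) := by
        simp [mul_assoc]
    _ = _ := by
        rw [h]
        simp only [← mul_assoc, hS, one_mul]

theorem exists_injective_star_algHom_pi_matrix {G : Type*} [Group G] [Finite G] {d : ℕ}
    (ρ : G →* Matrix.unitaryGroup (Fin d) ℂ) :
    ∃ (m : ℕ) (n : Fin m → ℕ) (φ : (∀ i, Matrix (Fin (n i)) (Fin (n i)) ℂ) →ₐ[ℂ]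
        Matrix (Fin d) (Fin d) ℂ),
      (∀ i, NeZero (n i)) ∧ Function.Injective φ ∧ (∀ x, φ (star x) = (φ x)ᴴ) ∧
      LinearMap.range φ.toLinearMap =
        Submodule.span ℂ (Set.range fun g : G => (ρ g : Matrix (Fin d) (Fin d) ℂ)) := by
  let r : G →* Matrix (Fin d) (Fin d) ℂ := (Matrix.unitaryGroup (Fin d) ℂ).subtype.comp ρ
  let L := MonoidAlgebra.lift ℂ (Matrix (Fin d) (Fin d) ℂ) G r
  have hL (g : G) : L (MonoidAlgebra.of ℂ G g) = r g := MonoidAlgebra.lift_of ..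
  have hspan : Subalgebra.toSubmodule L.range = Submodule.span ℂ (Set.range r) := by
    apply le_antisymm
    · rintro _ ⟨x, rfl⟩
      change L x ∈ _
      rw [MonoidAlgebra.lift_apply]
      exact Submodule.sum_mem _ fun g _ =>
        Submodule.smul_mem _ _ (Submodule.subset_span ⟨g, rfl⟩)
    · rw [Submodule.span_le]
      rintro _ ⟨g, rfl⟩
      exact ⟨_, hL g⟩
  have : NeZero (Nat.card G : ℂ) := ⟨by exact_mod_cast Nat.card_pos.ne'⟩
  have : IsSemisimpleRing L.range :=
    RingHom.isSemisimpleRing_of_surjective (L.rangeRestrict : MonoidAlgebra ℂ G →+* L.range)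
      L.rangeRestrict_surjective
  obtain ⟨m, n, hn, ⟨e⟩⟩ :=
    IsSemisimpleRing.exists_algEquiv_pi_matrix_of_isAlgClosed ℂ L.range
  let s : G →* ∀ i, Matrix (Fin (n i)) (Fin (n i)) ℂ :=
    ((e : L.range →* ∀ i, Matrix (Fin (n i)) (Fin (n i)) ℂ).comp
      (L.rangeRestrict : MonoidAlgebra ℂ G →* L.range)).comp (MonoidAlgebra.of ℂ G)
  choose S hS using fun i => Matrix.exists_units_conj_conjTranspose
    ((Pi.evalMonoidHom (fun i => Matrix (Fin (n i)) (Fin (n i)) ℂ) i).comp s)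
  let T : (∀ i, Matrix (Fin (n i)) (Fin (n i)) ℂ)ˣ := MulEquiv.piUnits.symm S
  let c := MulSemiringAction.toAlgEquiv ℂ (∀ i, Matrix (Fin (n i)) (Fin (n i)) ℂ)
    (ConjAct.toConjAct T)
  let ψ : L.range ≃ₐ[ℂ] ∀ i, Matrix (Fin (n i)) (Fin (n i)) ℂ := e.trans c
  let φ := L.range.val.comp ψ.symm.toAlgHom
  let v : G → ∀ i, Matrix (Fin (n i)) (Fin (n i)) ℂ := fun g => c (s g)
  have hv (g : G) : φ (v g) = r g := by
    change (Subtype.val (e.symm (c.symm (c (e (L.rangeRestrict (MonoidAlgebra.of ℂ G g)))))) :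
      Matrix (Fin d) (Fin d) ℂ) = _
    rw [AlgEquiv.symm_apply_apply, AlgEquiv.symm_apply_apply]
    exact hL g
  have hvstar (g : G) : star (v g) = v g⁻¹ := by
    funext i
    exact hS i g
  have hinj : Function.Injective φ := Subtype.val_injective.comp ψ.symm.injective
  have hrange : LinearMap.range φ.toLinearMap = Submodule.span ℂ (Set.range r) := by
    rw [← hspan]
    ext x
    constructor
    · rintro ⟨y, rfl⟩
      exact (ψ.symm y).2
    · intro hx
      exact ⟨ψ ⟨x, hx⟩, congrArg Subtype.val (ψ.symm_apply_apply ⟨x, hx⟩)⟩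
  refine ⟨m, n, φ, hn, hinj, fun x => ?_, hrange⟩
  have hx : x ∈ Submodule.span ℂ (Set.range v) := by
    have hmap : (Submodule.span ℂ (Set.range v)).map φ.toLinearMap =
        Submodule.span ℂ (Set.range r) := by
      rw [Submodule.map_span, ← Set.range_comp]
      congr 2
      exact funext hv
    have : φ x ∈ (Submodule.span ℂ (Set.range v)).map φ.toLinearMap := by
      rw [hmap, ← hrange]
      exact ⟨x, rfl⟩
    obtain ⟨y, hy, hyx⟩ := this
    exact hinj hyx ▸ hy
  induction hx using Submodule.span_induction with
  | mem x hx =>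
    obtain ⟨g, rfl⟩ := hx
    rw [hvstar, hv, hv]
    simp [r, star_eq_conjTranspose]
  | zero => simp
  | add x y _ _ hx hy => simp [hx, hy]
  | smul a x _ hx => simp [hx]

theorem exists_unitary_orthogonal_basis_pi_matrix {m : ℕ} (n : Fin m → ℕ) [∀ i, NeZero (n i)]
    {N : ℕ} (hN : ∑ i, n i * n i = N) :
    ∃ u : Fin N → ∀ i, Matrix (Fin (n i)) (Fin (n i)) ℂ,
      (∀ k, u k * star (u k) = 1) ∧
      ∀ s t : Σ i, Fin (n i) × Fin (n i),
        ∑ k, u k s.1 s.2.1 s.2.2 * star (u k t.1 t.2.1 t.2.2) =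
          if s = t then (N : ℂ) / n s.1 else 0 := by
  subst hN
  set N := ∑ i, n i * n i with hN
  obtain ⟨f, α, β, hf⟩ : ∃ (f : (Σ i, Fin (n i) × Fin (n i)) ≃ Fin N)
      (α β : ∀ i, Fin (n i) → ℕ), ∀ s, (f s : ℕ) = α s.1 s.2.1 + β s.1 s.2.2 := by
    refine ⟨(Equiv.sigmaCongrRight fun i => finProdFinEquiv).trans finSigmaFinEquiv,
      fun i a => ∑ j : Fin i, n (Fin.castLE i.2.le j) * n (Fin.castLE i.2.le j) + n i * a,
      fun i b => b, fun s => ?_⟩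
    rw [Equiv.trans_apply, finSigmaFinEquiv_apply, Equiv.sigmaCongrRight_apply]
    change _ + ((s.2.2 : ℕ) + n s.1 * (s.2.1 : ℕ)) = _
    rw [add_comm (s.2.2 : ℕ), add_assoc]
  rcases Nat.eq_zero_or_pos N with h0 | hpos
  · have : IsEmpty (Fin N) := by rw [h0]; infer_instance
    exact ⟨fun k => isEmptyElim k, fun k => isEmptyElim k, fun s => isEmptyElim (f s)⟩
  have hω := Complex.isPrimitiveRoot_exp N hpos.ne'
  have hζ (i : Fin m) := Complex.isPrimitiveRoot_exp (n i) (NeZero.ne _)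
  generalize Complex.exp (2 * Real.pi * Complex.I / N) = ω at hω
  generalize hz : (fun i => Complex.exp (2 * Real.pi * Complex.I / n i)) = ζ
  replace hζ (i : Fin m) : IsPrimitiveRoot (ζ i) (n i) := by rw [← hz]; exact hζ i
  have hωω (j : ℕ) : ω ^ j * star (ω ^ j) = 1 := by
    have := Complex.mul_conj' (ω ^ j)
    rw [norm_pow, hω.norm'_eq_one hpos.ne'] at this
    simpa using this
  have hζζ (i : Fin m) (j : ℕ) : ζ i ^ j * star (ζ i ^ j) = 1 := by
    have := Complex.mul_conj' (ζ i ^ j)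
    rw [norm_pow, (hζ i).norm'_eq_one (NeZero.ne _)] at this
    simpa using this
  have hsqrt (i : Fin m) : ((√(n i) : ℝ) : ℂ)⁻¹ * star ((√(n i) : ℝ) : ℂ)⁻¹ = (n i : ℂ)⁻¹ := by
    rw [star_inv₀, ← mul_inv, Complex.star_def, Complex.conj_ofReal, ← Complex.ofReal_mul,
      Real.mul_self_sqrt (Nat.cast_nonneg _), Complex.ofReal_natCast]
  have hn0 (i : Fin m) : (n i : ℂ) ≠ 0 := NeZero.ne _
  refine ⟨fun k i => Matrix.of fun a b =>
    ((√(n i) : ℝ) : ℂ)⁻¹ * ζ i ^ ((b : ℕ) * (a : ℕ)) * ω ^ ((k : ℕ) * (α i a + β i b)),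
    fun k => ?_, fun s t => ?_⟩
  · funext i
    ext a a'
    simp only [Pi.mul_apply, Pi.star_apply, Pi.one_apply, mul_apply, star_apply, of_apply]
    have hterm (b : Fin (n i)) :
        ((√(n i) : ℝ) : ℂ)⁻¹ * ζ i ^ ((b : ℕ) * (a : ℕ)) * ω ^ ((k : ℕ) * (α i a + β i b)) *
          star (((√(n i) : ℝ) : ℂ)⁻¹ * ζ i ^ ((b : ℕ) * (a' : ℕ)) *
            ω ^ ((k : ℕ) * (α i a' + β i b))) =
        (n i : ℂ)⁻¹ * ω ^ ((k : ℕ) * α i a) * star (ω ^ ((k : ℕ) * α i a')) *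
          (ζ i ^ ((b : ℕ) * (a : ℕ)) * star (ζ i ^ ((b : ℕ) * (a' : ℕ)))) := by
      simp only [mul_add, pow_add, star_mul']
      linear_combination (ζ i ^ ((b : ℕ) * (a : ℕ)) * star (ζ i ^ ((b : ℕ) * (a' : ℕ)))) *
        ω ^ ((k : ℕ) * α i a) * star (ω ^ ((k : ℕ) * α i a')) * (
        (ω ^ ((k : ℕ) * β i b) * star (ω ^ ((k : ℕ) * β i b))) * hsqrt i
        + (n i : ℂ)⁻¹ * hωω (k * β i b))
    simp_rw [hterm]
    rw [← Finset.mul_sum, (hζ i).sum_pow_mul_star_pow, one_apply]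
    split_ifs with h
    · subst h
      rw [mul_assoc _ (ω ^ _), hωω, mul_one, inv_mul_cancel₀ (hn0 i)]
    · simp
  · obtain ⟨i, a, b⟩ := s
    obtain ⟨j, c, e⟩ := t
    have h1 := hω.sum_pow_mul_star_pow (f ⟨i, a, b⟩) (f ⟨j, c, e⟩)
    simp only [hf, EmbeddingLike.apply_eq_iff_eq] at h1
    simp only [of_apply]
    have hterm (k : Fin N) :
        ((√(n i) : ℝ) : ℂ)⁻¹ * ζ i ^ ((b : ℕ) * (a : ℕ)) * ω ^ ((k : ℕ) * (α i a + β i b)) *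
          star (((√(n j) : ℝ) : ℂ)⁻¹ * ζ j ^ ((e : ℕ) * (c : ℕ)) *
            ω ^ ((k : ℕ) * (α j c + β j e))) =
        (((√(n i) : ℝ) : ℂ)⁻¹ * star ((√(n j) : ℝ) : ℂ)⁻¹) *
        (ζ i ^ ((b : ℕ) * (a : ℕ)) * star (ζ j ^ ((e : ℕ) * (c : ℕ)))) *
        (ω ^ ((k : ℕ) * (α i a + β i b)) * star (ω ^ ((k : ℕ) * (α j c + β j e)))) := by
      simp only [star_mul']
      ring
    simp_rw [hterm]
    rw [← Finset.mul_sum, h1]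
    split_ifs with h
    · cases h
      rw [hζζ, hsqrt]
      ring
    · simp

theorem Pi.eq_sum_smul_single_single {m : ℕ} {n : Fin m → ℕ}
    (x : ∀ i, Matrix (Fin (n i)) (Fin (n i)) ℂ) :
    x = ∑ s : Σ i, Fin (n i) × Fin (n i), x s.1 s.2.1 s.2.2 •
      (Pi.single s.1 (Matrix.single s.2.1 s.2.2 1) : ∀ i, Matrix (Fin (n i)) (Fin (n i)) ℂ) := by
  funext j
  ext p q
  rw [Fintype.sum_sigma, Finset.sum_apply, Finset.sum_eq_single j]
  · simp [Fintype.sum_prod_type, Finset.sum_apply, Matrix.sum_apply, Matrix.single_apply, ite_and]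
  · intro i _ hi
    simp [Finset.sum_apply, Pi.single_eq_of_ne hi.symm]
  · simp

theorem Pi.single_single_mul {m : ℕ} {n : Fin m → ℕ} (i : Fin m) (a b : Fin (n i))
    (x : ∀ i, Matrix (Fin (n i)) (Fin (n i)) ℂ) :
    (Pi.single i (Matrix.single a b 1) : ∀ i, Matrix (Fin (n i)) (Fin (n i)) ℂ) * x =
      ∑ c, x i b c • Pi.single i (Matrix.single a c 1) := by
  funext j
  by_cases h : j = i
  · subst h
    ext p q
    simp [Finset.sum_apply, Matrix.sum_apply, Matrix.single_apply, Matrix.mul_apply, ite_and]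
  · simp [Finset.sum_apply, h]

theorem Pi.mul_single_single {m : ℕ} {n : Fin m → ℕ} (i : Fin m) (a b : Fin (n i))
    (x : ∀ i, Matrix (Fin (n i)) (Fin (n i)) ℂ) :
    x * (Pi.single i (Matrix.single a b 1) : ∀ i, Matrix (Fin (n i)) (Fin (n i)) ℂ) =
      ∑ c, x i c a • Pi.single i (Matrix.single c b 1) := by
  funext j
  by_cases h : j = i
  · subst h
    ext p q
    simp [Finset.sum_apply, Matrix.sum_apply, Matrix.single_apply, Matrix.mul_apply, ite_and]
  · simp [Finset.sum_apply, h]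

theorem sum_single_mul_mul_single_comm {m : ℕ} {n : Fin m → ℕ} {A : Type*}
    [Ring A] [Algebra ℂ A]
    (φ : (∀ i, Matrix (Fin (n i)) (Fin (n i)) ℂ) →ₐ[ℂ] A)
    (w : Fin m → ℂ) (x : ∀ i, Matrix (Fin (n i)) (Fin (n i)) ℂ) (Z : A) :
    ∑ s : Σ i, Fin (n i) × Fin (n i), w s.1 •
        (φ (Pi.single s.1 (Matrix.single s.2.1 s.2.2 1)) * (φ x * Z) *
          φ (Pi.single s.1 (Matrix.single s.2.2 s.2.1 1))) =
      ∑ s : Σ i, Fin (n i) × Fin (n i), w s.1 •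
        (φ (Pi.single s.1 (Matrix.single s.2.1 s.2.2 1)) * (Z * φ x) *
          φ (Pi.single s.1 (Matrix.single s.2.2 s.2.1 1))) := by
  simp only [Fintype.sum_sigma, Fintype.sum_prod_type]
  refine Finset.sum_congr rfl fun i _ => ?_
  refine Finset.sum_congr rfl fun a _ => ?_
  have h1 (b : Fin (n i)) : φ (Pi.single i (Matrix.single a b 1)) * (φ x * Z) =
      ∑ c, x i b c • (φ (Pi.single i (Matrix.single a c 1)) * Z) := by
    rw [← mul_assoc, ← map_mul, Pi.single_single_mul]
    simp [Finset.sum_mul]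
  have h2 (b : Fin (n i)) : φ (Pi.single i (Matrix.single a b 1)) * (Z * φ x) *
      φ (Pi.single i (Matrix.single b a 1)) =
      ∑ c, x i c b • (φ (Pi.single i (Matrix.single a b 1)) * Z *
        φ (Pi.single i (Matrix.single c a 1))) := by
    rw [← mul_assoc, mul_assoc, ← map_mul, Pi.mul_single_single]
    simp [Finset.mul_sum]
  simp only [h1, h2, Finset.sum_mul, Finset.smul_sum, smul_mul_assoc]
  exact Finset.sum_comm

theorem sum_map_mul_mul_map_star {m : ℕ} {n : Fin m → ℕ} {A : Type*} [Ring A]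
    [Algebra ℂ A] [StarRing A] [StarModule ℂ A]
    (φ : (∀ i, Matrix (Fin (n i)) (Fin (n i)) ℂ) →ₐ[ℂ] A) (hφ : ∀ x, φ (star x) = star (φ x))
    {κ : Type*} [Fintype κ] (u : κ → ∀ i, Matrix (Fin (n i)) (Fin (n i)) ℂ) (w : Fin m → ℂ)
    (hu : ∀ s t : Σ i, Fin (n i) × Fin (n i),
      ∑ k, u k s.1 s.2.1 s.2.2 * star (u k t.1 t.2.1 t.2.2) = if s = t then w s.1 else 0) (Z : A) :
    ∑ k, φ (u k) * Z * star (φ (u k)) =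
      ∑ s : Σ i, Fin (n i) × Fin (n i), w s.1 •
        (φ (Pi.single s.1 (Matrix.single s.2.1 s.2.2 1)) * Z *
          φ (Pi.single s.1 (Matrix.single s.2.2 s.2.1 1))) := by
  have hstar (s : Σ i, Fin (n i) × Fin (n i)) :
      star (φ (Pi.single s.1 (Matrix.single s.2.1 s.2.2 1))) =
        φ (Pi.single s.1 (Matrix.single s.2.2 s.2.1 1)) := by
    rw [← hφ, ← Pi.single_star]
    simp [Matrix.star_eq_conjTranspose]
  have hexp (k : κ) : φ (u k) = ∑ s : Σ i, Fin (n i) × Fin (n i),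
      u k s.1 s.2.1 s.2.2 • φ (Pi.single s.1 (Matrix.single s.2.1 s.2.2 1)) := by
    conv_lhs => rw [Pi.eq_sum_smul_single_single (u k)]
    simp
  have hterm (k : κ) : φ (u k) * Z * star (φ (u k)) =
      ∑ s : Σ i, Fin (n i) × Fin (n i), ∑ t : Σ i, Fin (n i) × Fin (n i),
        (u k s.1 s.2.1 s.2.2 * star (u k t.1 t.2.1 t.2.2)) •
        (φ (Pi.single s.1 (Matrix.single s.2.1 s.2.2 1)) * Z *
          φ (Pi.single t.1 (Matrix.single t.2.2 t.2.1 1))) := by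
    rw [hexp k, star_sum, Finset.sum_mul, Finset.sum_mul_sum]
    simp only [star_smul, hstar, smul_mul_assoc, mul_smul_comm, smul_smul, mul_comm]
  simp_rw [hterm]
  rw [Finset.sum_comm]
  refine Finset.sum_congr rfl fun s _ => ?_
  rw [Finset.sum_comm]
  simp_rw [← Finset.sum_smul, hu]
  simp [ite_smul]

/-- The twirling channel of a unitary representation of a finite group
is mixed unitary with a decomposition into `N` unitary conjugations, where `N` is
the dimension of the linear span of the representation matrices (the von Neumann
algebra generated by the representation). -/
theorem stmt_4 (G : Type*) [Group G] [Fintype G] (d : ℕ) (hd : 0 < d)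
    (ρ : G →* Matrix.unitaryGroup (Fin d) ℂ)
    (N : ℕ)
    (hN : N = Module.finrank ℂ
      ↥(Submodule.span ℂ (Set.range fun g : G => (ρ g : Matrix (Fin d) (Fin d) ℂ)))) :
    ∃ (U : Fin N → Matrix (Fin d) (Fin d) ℂ) (p : Fin N → ℝ),
      (∀ k, (U k)ᴴ * U k = 1 ∧ U k * (U k)ᴴ = 1) ∧
      (∀ k, 0 ≤ p k) ∧ (∑ k, p k = 1) ∧
      (∀ X : Matrix (Fin d) (Fin d) ℂ,
        (1 / (Fintype.card G : ℂ)) •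
            ∑ g : G, (ρ g : Matrix (Fin d) (Fin d) ℂ) * X * ((ρ g : Matrix (Fin d) (Fin d) ℂ))ᴴ =
          ∑ k, (p k : ℂ) • (U k * X * (U k)ᴴ)) := by
  obtain ⟨m, n, φ, hn, hinj, hstar, hrange⟩ := exists_injective_star_algHom_pi_matrix ρ
  have hNn : ∑ i, n i * n i = N := by
    rw [hN, ← hrange, LinearMap.finrank_range_of_inj (f := φ.toLinearMap) hinj]
    simp [Module.finrank_pi_fintype, Module.finrank_matrix]
  have hNpos : N ≠ 0 := by
    rintro rfl
    have hbot := Submodule.finrank_eq_zero.mp hN.symm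
    have h1 : ((ρ 1 : Matrix.unitaryGroup (Fin d) ℂ) : Matrix (Fin d) (Fin d) ℂ) = 0 := by
      rw [← Submodule.mem_bot ℂ, ← hbot]
      exact Submodule.subset_span ⟨1, rfl⟩
    have := congrFun (congrFun h1 ⟨0, hd⟩) ⟨0, hd⟩
    simp at this
  have hNC : (N : ℂ) ≠ 0 := Nat.cast_ne_zero.mpr hNpos
  obtain ⟨u, hu, horth⟩ := exists_unitary_orthogonal_basis_pi_matrix n hNn
  have hU (k : Fin N) : φ (u k) * (φ (u k))ᴴ = 1 := by
    rw [← hstar, ← map_mul, hu, map_one]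
  refine ⟨fun k => φ (u k), fun _ => (N : ℝ)⁻¹, fun k => ⟨mul_eq_one_comm.mp (hU k), hU k⟩,
    fun _ => by positivity, by simp [hNpos], fun X => ?_⟩
  set r : G → Matrix (Fin d) (Fin d) ℂ := fun g => (ρ g : Matrix (Fin d) (Fin d) ℂ) with hr
  have hrmul (g h : G) : r g * r h = r (g * h) := by simp [hr]
  have hrstar (g : G) : (r g)ᴴ = r g⁻¹ := by simp [hr, star_eq_conjTranspose]
  have hr1 : r 1 = 1 := by simp [hr]
  let Ψ : Matrix (Fin d) (Fin d) ℂ →ₗ[ℂ] Matrix (Fin d) (Fin d) ℂ :=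
    ∑ k, LinearMap.mulLeftRight ℂ (φ (u k), (φ (u k))ᴴ)
  have hΨ (Z) : Ψ Z = ∑ k, φ (u k) * Z * (φ (u k))ᴴ := by
    simp [Ψ, LinearMap.sum_apply]
  have hΨcomm (g : G) (Z : Matrix (Fin d) (Fin d) ℂ) : Ψ (r g * Z) = Ψ (Z * r g) := by
    obtain ⟨x, hx⟩ : r g ∈ LinearMap.range φ.toLinearMap := by
      rw [hrange]
      exact Submodule.subset_span ⟨g, rfl⟩
    replace hx : φ x = r g := hx
    have h := sum_map_mul_mul_map_star φ hstar u (fun i => (N : ℂ) / n i) horth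
    simp only [star_eq_conjTranspose] at h
    rw [hΨ, hΨ, h, h, ← hx]
    exact sum_single_mul_mul_single_comm φ (fun i => (N : ℂ) / n i) x Z
  have hcard : (Fintype.card G : ℂ) ≠ 0 := Nat.cast_ne_zero.mpr Fintype.card_ne_zero
  set Y := ∑ g, r g * X * (r g)ᴴ with hY
  have hΨY : Ψ Y = (Fintype.card G : ℂ) • Ψ X := by
    have (g : G) : Ψ (r g * X * (r g)ᴴ) = Ψ X := by
      rw [mul_assoc, hΨcomm, hrstar, mul_assoc, hrmul, inv_mul_cancel, hr1, mul_one]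
    simp only [hY, map_sum, this, Finset.sum_const, Finset.card_univ, Nat.cast_smul_eq_nsmul]
  have hYr (g : G) : r g * Y = Y * r g := by
    simp only [hY, Finset.mul_sum, Finset.sum_mul, hrstar]
    rw [← Equiv.sum_comp (Equiv.mulLeft g) fun h => r h * X * r h⁻¹ * r g]
    refine Finset.sum_congr rfl fun h _ => ?_
    rw [Equiv.coe_mulLeft, mul_assoc _ _ (r g), hrmul, ← hrmul g h, _root_.mul_inv_rev,
      inv_mul_cancel_right, mul_assoc (r g), mul_assoc (r g)]
  have hYφ (x) : φ x * Y = Y * φ x := by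
    have hx : φ x ∈ Submodule.span ℂ (Set.range r) := by
      rw [← hrange]
      exact ⟨x, rfl⟩
    generalize φ x = y at hx
    induction hx using Submodule.span_induction with
    | mem y hy => obtain ⟨g, rfl⟩ := hy; exact hYr g
    | zero => simp
    | add y z _ _ hy hz => rw [add_mul, mul_add, hy, hz]
    | smul a y _ hy => rw [smul_mul_assoc, mul_smul_comm, hy]
  have hΨY' : Ψ Y = (N : ℂ) • Y := by
    simp [hΨ, hYφ, mul_assoc, hU, Nat.cast_smul_eq_nsmul]
  have hfinal : Y = ((N : ℂ)⁻¹ * Fintype.card G) • Ψ X := by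
    rw [mul_smul, ← hΨY, hΨY', inv_smul_smul₀ hNC]
  rw [← Finset.smul_sum, ← hΨ, hfinal, smul_smul]
  congr 1
  push_cast
  field_simp
end

section
/- Let n be a positive integer and set N = (n⁴ + n²)/2. Let U(n) denote the compact group of n×n complex unitary matrices with its Borel σ-algebra and normalized Haar probability measure μ. Then there exist unitary matrices W_1, …, W_N ∈ M_{n²}(ℂ) such that for every X ∈ M_{n²}(ℂ) and all indices i, j, ∫_{U(n)} ((U⊗U) X (U⊗U)ᴴ)(i,j) dμ(U) = [ (1/N) Σ_{k=1}^{N} W_k X W_kᴴ ](i,j). -/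
open Matrix BigOperators MeasureTheory Kronecker

theorem sum_pow_mul_star_pow {N : ℕ} {ω : ℂ} (hω : IsPrimitiveRoot ω N) {u v : ℕ}
    (hu : u < N) (hv : v < N) :
    ∑ k : Fin N, ω ^ ((k : ℕ) * u) * star (ω ^ ((k : ℕ) * v)) = if u = v then (N : ℂ) else 0 := by
  have hN : N ≠ 0 := by omega
  have hω0 : ω ≠ 0 := hω.ne_zero hN
  have hstar : star ω = ω⁻¹ := (Complex.inv_eq_conj (hω.norm'_eq_one hN)).symm
  have hterm : ∀ k : ℕ, ω ^ (k * u) * star (ω ^ (k * v)) = (ω ^ u * (ω ^ v)⁻¹) ^ k := fun k => by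
    rw [star_pow, hstar, mul_pow, ← pow_mul, inv_pow, inv_pow, ← pow_mul, mul_comm u, mul_comm v]
  simp only [hterm]
  rw [Fin.sum_univ_eq_sum_range (fun k => (ω ^ u * (ω ^ v)⁻¹) ^ k) N]
  split_ifs with huv
  · subst huv
    simp [mul_inv_cancel₀ (pow_ne_zero u hω0)]
  · have hz : ω ^ u * (ω ^ v)⁻¹ ≠ 1 := fun h =>
      huv (hω.pow_inj hu hv ((mul_inv_eq_one₀ (pow_ne_zero v hω0)).1 h))
    rw [geom_sum_eq hz, mul_pow, ← pow_mul, inv_pow, ← pow_mul, mul_comm u, mul_comm v, pow_mul,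
      pow_mul, hω.pow_eq_one]
    simp

/-- The unitary discrete Fourier transform matrix. -/
noncomputable def fourierMatrix (d : ℕ) : Matrix (Fin d) (Fin d) ℂ :=
  of fun i j => ((Real.sqrt d : ℝ) : ℂ)⁻¹ *
    Complex.exp (2 * Real.pi * Complex.I / d) ^ ((j : ℕ) * (i : ℕ))

theorem fourierMatrix_mul_conjTranspose (d : ℕ) :
    fourierMatrix d * (fourierMatrix d)ᴴ = 1 := by
  ext i i'
  have hd : d ≠ 0 := by have := i.2; omega
  have hdc : (d : ℂ) ≠ 0 := by exact_mod_cast hd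
  have hs : ((Real.sqrt d : ℝ) : ℂ)⁻¹ * ((Real.sqrt d : ℝ) : ℂ)⁻¹ = (d : ℂ)⁻¹ := by
    rw [← mul_inv, ← Complex.ofReal_mul, Real.mul_self_sqrt (Nat.cast_nonneg d),
      Complex.ofReal_natCast]
  have key := sum_pow_mul_star_pow (Complex.isPrimitiveRoot_exp d hd) i.2 i'.2
  calc (fourierMatrix d * (fourierMatrix d)ᴴ) i i'
      = (d : ℂ)⁻¹ * ∑ k : Fin d, Complex.exp (2 * Real.pi * Complex.I / d) ^ ((k : ℕ) * (i : ℕ)) *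
          star (Complex.exp (2 * Real.pi * Complex.I / d) ^ ((k : ℕ) * (i' : ℕ))) := by
        rw [mul_apply, Finset.mul_sum]
        refine Finset.sum_congr rfl fun k _ => ?_
        simp only [fourierMatrix, conjTranspose_apply, of_apply, star_mul', ← hs]
        simp only [RCLike.star_def, map_inv₀, Complex.conj_ofReal]
        ring
    _ = (1 : Matrix (Fin d) (Fin d) ℂ) i i' := by
        rw [key, one_apply]
        simp only [Fin.val_inj]
        split_ifs <;> simp [hdc]

theorem fourierMatrix_mul_star_self (d : ℕ) (i j : Fin d) :
    fourierMatrix d i j * star (fourierMatrix d i j) = (d : ℂ)⁻¹ := by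
  have hd : d ≠ 0 := by have := i.2; omega
  have hs : ((Real.sqrt d : ℝ) : ℂ)⁻¹ * ((Real.sqrt d : ℝ) : ℂ)⁻¹ = (d : ℂ)⁻¹ := by
    rw [← mul_inv, ← Complex.ofReal_mul, Real.mul_self_sqrt (Nat.cast_nonneg d),
      Complex.ofReal_natCast]
  have hω := (Complex.isPrimitiveRoot_exp d hd).norm'_eq_one hd
  rw [RCLike.star_def, Complex.mul_conj, Complex.normSq_eq_norm_sq, fourierMatrix, of_apply,
    norm_mul, norm_pow, hω, one_pow, mul_one, norm_inv, Complex.norm_real, Real.norm_eq_abs,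
    ← hs, abs_of_nonneg (Real.sqrt_nonneg _)]
  push_cast
  ring

section Phase

variable {ι : Type*} [Fintype ι] [DecidableEq ι]

/-- The matrix `H` with its `(i, j)` entry multiplied by the phase `ω ^ (k * (p i + q j))`. -/
def phaseTwist (ω : ℂ) (p q : ι → ℕ) (H : Matrix ι ι ℂ) (k : ℕ) : Matrix ι ι ℂ :=
  of fun i j => ω ^ (k * (p i + q j)) * H i j

theorem phaseTwist_mul_conjTranspose {ω : ℂ} (hω : ω * star ω = 1) (p q : ι → ℕ)
    {H : Matrix ι ι ℂ} (hH : H * Hᴴ = 1) (k : ℕ) :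
    phaseTwist ω p q H k * (phaseTwist ω p q H k)ᴴ = 1 := by
  have hpow : ∀ m : ℕ, ω ^ m * star ω ^ m = 1 := fun m => by rw [← mul_pow, hω, one_pow]
  ext i i'
  have h := congrFun (congrFun hH i) i'
  rw [mul_apply] at h ⊢
  simp only [conjTranspose_apply] at h
  have : ∀ j, phaseTwist ω p q H k i j * (phaseTwist ω p q H k)ᴴ j i' =
      ω ^ (k * p i) * star ω ^ (k * p i') * (H i j * star (H i' j)) := fun j => by
    simp only [phaseTwist, conjTranspose_apply, of_apply, star_mul', star_pow, mul_add, pow_add]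
    linear_combination (ω ^ (k * p i) * star ω ^ (k * p i') * (H i j * star (H i' j))) *
      hpow (k * q j)
  rw [Finset.sum_congr rfl fun j _ => this j, ← Finset.mul_sum, h, one_apply]
  split_ifs with hii
  · subst hii
    rw [hpow, mul_one]
  · simp

theorem sum_phaseTwist_conj {N : ℕ} {ω : ℂ} (hω : IsPrimitiveRoot ω N) {p q : ι → ℕ}
    {H : Matrix ι ι ℂ} (hlt : ∀ i j, H i j ≠ 0 → p i + q j < N)
    (hinj : ∀ i j i' j', H i j ≠ 0 → H i' j' ≠ 0 → p i + q j = p i' + q j' → i = i' ∧ j = j')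
    (X : Matrix ι ι ℂ) :
    ∑ k : Fin N, phaseTwist ω p q H k * X * (phaseTwist ω p q H k)ᴴ =
      diagonal fun i => (N : ℂ) * ∑ j, H i j * star (H i j) * X j j := by
  ext i i'
  have hsum : ∀ j j', ∑ k : Fin N, phaseTwist ω p q H k i j * X j j' *
      star (phaseTwist ω p q H k i' j') =
      if i = i' ∧ j = j' then (N : ℂ) * (H i j * star (H i j) * X j j) else 0 := by
    intro j j'
    by_cases h1 : H i j = 0
    · simp [phaseTwist, h1]
    by_cases h2 : H i' j' = 0
    · have : ¬ (i = i' ∧ j = j') := by rintro ⟨rfl, rfl⟩; exact h1 h2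
      simp [phaseTwist, h2, this]
    have h := sum_pow_mul_star_pow hω (hlt i j h1) (hlt i' j' h2)
    calc _ = (H i j * star (H i' j') * X j j') * ∑ k : Fin N,
          ω ^ ((k : ℕ) * (p i + q j)) * star (ω ^ ((k : ℕ) * (p i' + q j'))) := by
          rw [Finset.mul_sum]
          refine Finset.sum_congr rfl fun k _ => ?_
          simp only [phaseTwist, of_apply, star_mul']
          ring
      _ = _ := by
          rw [h]
          by_cases hc : i = i' ∧ j = j'
          · obtain ⟨rfl, rfl⟩ := hc
            simp; ring
          · rw [if_neg hc, if_neg fun he => hc (hinj i j i' j' h1 h2 he), mul_zero]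
  calc _ = ∑ j', ∑ j, ∑ k : Fin N, phaseTwist ω p q H k i j * X j j' *
      star (phaseTwist ω p q H k i' j') := by
        simp only [Matrix.sum_apply, mul_apply, conjTranspose_apply, Finset.sum_mul]
        rw [Finset.sum_comm]
        refine Finset.sum_congr rfl fun j' _ => ?_
        rw [Finset.sum_comm]
    _ = _ := by
        simp only [hsum, diagonal_apply]
        by_cases hii : i = i'
        · simp [hii, Finset.mul_sum]
        · simp [hii]

end Phase

/-- The signature matrix `diag(1, …, 1, -1, …, -1)`. -/
def signature (a b : ℕ) : Matrix (Fin a ⊕ Fin b) (Fin a ⊕ Fin b) ℂ := fromBlocks 1 0 0 (-1)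

theorem mul_add_inj_of_lt {d : ℕ} {i j i' j' : Fin d}
    (h : d * (i : ℕ) + j = d * (i' : ℕ) + j') : i = i' ∧ j = j' := by
  have := (finProdFinEquiv (m := d) (n := d)).injective (a₁ := (i, j)) (a₂ := (i', j'))
    (Fin.ext (by simpa [finProdFinEquiv, add_comm] using h))
  simpa using this

theorem mul_add_lt_mul_self {d : ℕ} (i j : Fin d) : d * (i : ℕ) + j < d * d := by
  have hi := i.2
  have hj := j.2
  nlinarith

theorem exists_unitary_commute_signature {a b N : ℕ} (hN : a * a + b * b = N) (hN0 : N ≠ 0) :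
    ∃ W : Fin N → Matrix (Fin a ⊕ Fin b) (Fin a ⊕ Fin b) ℂ,
      (∀ k, W k * (W k)ᴴ = 1) ∧ (∀ k, W k * signature a b = signature a b * W k) ∧
      ∀ X Y, trace X = trace Y → trace (signature a b * X) = trace (signature a b * Y) →
        ∑ k, W k * X * (W k)ᴴ = ∑ k, W k * Y * (W k)ᴴ := by
  have hω := Complex.isPrimitiveRoot_exp N hN0
  set ω := Complex.exp (2 * Real.pi * Complex.I / N)
  let H : Matrix (Fin a ⊕ Fin b) (Fin a ⊕ Fin b) ℂ :=
    fromBlocks (fourierMatrix a) 0 0 (fourierMatrix b)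
  let p : Fin a ⊕ Fin b → ℕ := Sum.elim (fun i => a * i) fun i => a * a + b * i
  let q : Fin a ⊕ Fin b → ℕ := Sum.elim (fun j => j) fun j => j
  have hH : H * Hᴴ = 1 := by
    simp [H, fromBlocks_conjTranspose, fromBlocks_multiply, fourierMatrix_mul_conjTranspose]
  have hlt : ∀ i j, H i j ≠ 0 → p i + q j < N := by
    rintro (i | i) (j | j) hij
    · have := mul_add_lt_mul_self i j
      simp only [p, q, Sum.elim_inl]
      omega
    · simp [H] at hij
    · simp [H] at hij
    · have := mul_add_lt_mul_self i j
      simp only [p, q, Sum.elim_inr]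
      omega
  have hinj : ∀ i j i' j', H i j ≠ 0 → H i' j' ≠ 0 → p i + q j = p i' + q j' →
      i = i' ∧ j = j' := by
    rintro (i | i) (j | j) (i' | i') (j' | j') h1 h2 h
    any_goals simp [H] at h1
    any_goals simp [H] at h2
    all_goals simp only [p, q, Sum.elim_inr, Sum.elim_inl] at h
    · simpa using mul_add_inj_of_lt h
    · have := mul_add_lt_mul_self i j
      omega
    · have := mul_add_lt_mul_self i' j'
      omega
    · simpa using mul_add_inj_of_lt (by omega : b * (i : ℕ) + j = b * (i' : ℕ) + j')
  refine ⟨fun k => phaseTwist ω p q H k, fun k => phaseTwist_mul_conjTranspose ?_ p q hH k,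
    fun k => ?_, fun X Y hXY hs => ?_⟩
  · rw [RCLike.star_def, Complex.mul_conj, Complex.normSq_eq_norm_sq, hω.norm'_eq_one hN0]
    simp
  · have hblock : phaseTwist ω p q H k = fromBlocks (phaseTwist ω p q H k).toBlocks₁₁ 0 0
        (phaseTwist ω p q H k).toBlocks₂₂ := by
      ext (i | i) (j | j) <;> simp [phaseTwist, toBlocks₁₁, toBlocks₂₂, H]
    change phaseTwist ω p q H k * signature a b = signature a b * phaseTwist ω p q H k
    rw [hblock]
    simp [signature, fromBlocks_multiply]
  · have htr : ∀ X : Matrix (Fin a ⊕ Fin b) (Fin a ⊕ Fin b) ℂ,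
        trace X = ∑ i, X (Sum.inl i) (Sum.inl i) + ∑ i, X (Sum.inr i) (Sum.inr i) := fun X => by
      simp [trace]
    have hsg : ∀ X : Matrix (Fin a ⊕ Fin b) (Fin a ⊕ Fin b) ℂ, trace (signature a b * X) =
        ∑ i, X (Sum.inl i) (Sum.inl i) - ∑ i, X (Sum.inr i) (Sum.inr i) := fun X => by
      rw [htr]
      simp [signature, mul_apply, one_apply, sub_eq_add_neg]
    rw [htr, htr] at hXY
    rw [hsg, hsg] at hs
    rw [sum_phaseTwist_conj hω hlt hinj, sum_phaseTwist_conj hω hlt hinj]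
    congr 1
    ext (i | i)
    · simp only [H, Fintype.sum_sum_type, fromBlocks_apply₁₁, fromBlocks_apply₁₂, Matrix.zero_apply,
        fourierMatrix_mul_star_self, zero_mul, Finset.sum_const_zero, ← Finset.mul_sum]
      linear_combination (N : ℂ) * (a : ℂ)⁻¹ * (hXY + hs) / 2
    · simp only [H, Fintype.sum_sum_type, fromBlocks_apply₂₁, fromBlocks_apply₂₂, Matrix.zero_apply,
        fourierMatrix_mul_star_self, zero_mul, Finset.sum_const_zero, ← Finset.mul_sum]
      linear_combination (N : ℂ) * (b : ℂ)⁻¹ * (hXY - hs) / 2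

/-- The matrix exchanging the two tensor factors. -/
def swapMatrix (ι : Type*) [DecidableEq ι] : Matrix (ι × ι) (ι × ι) ℂ :=
  (1 : Matrix (ι × ι) (ι × ι) ℂ).submatrix Prod.swap id

/-- The coefficient of `e_c` in the symmetric or antisymmetric basis vector indexed by `c`. -/
noncomputable def symCoeff {n : ℕ} (c : Fin n × Fin n) : ℂ :=
  if c.1 = c.2 then 1 else ((Real.sqrt 2)⁻¹ : ℝ)

/-- The coefficient of `e_{c.swap}` in the symmetric or antisymmetric basis vector
indexed by `c`. -/
noncomputable def swapCoeff {n : ℕ} (c : Fin n × Fin n) : ℂ :=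
  if c.1 = c.2 then 0 else if c.1 < c.2 then ((Real.sqrt 2)⁻¹ : ℝ) else -((Real.sqrt 2)⁻¹ : ℝ)

/-- The orthonormal basis adapted to the symmetric and antisymmetric tensors: the column of `c`
is symmetric if `c.1 ≤ c.2` and antisymmetric otherwise. -/
noncomputable def symBasisMatrix (n : ℕ) : Matrix (Fin n × Fin n) (Fin n × Fin n) ℂ :=
  of fun p c => (if p = c then symCoeff c else 0) + if p = c.swap then swapCoeff c else 0

theorem symBasisMatrix_conjTranspose_mul (n : ℕ) :
    (symBasisMatrix n)ᴴ * symBasisMatrix n = 1 := by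
  have hr : ((Real.sqrt 2)⁻¹ : ℝ) * ((Real.sqrt 2)⁻¹ : ℝ) = (1 / 2 : ℂ) := by
    rw [← Complex.ofReal_mul, ← mul_inv, Real.mul_self_sqrt (by norm_num)]
    norm_num
  have hs1 : ∀ c : Fin n × Fin n, star (symCoeff c) = symCoeff c := fun c => by
    unfold symCoeff
    split_ifs
    · simp
    · exact Complex.conj_ofReal _
  have hs2 : ∀ c : Fin n × Fin n, star (swapCoeff c) = swapCoeff c := fun c => by
    unfold swapCoeff
    split_ifs
    · simp
    · exact Complex.conj_ofReal _
    · rw [star_neg]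
      exact congrArg _ (Complex.conj_ofReal _)
  have hsq : ∀ c : Fin n × Fin n, symCoeff c * symCoeff c + swapCoeff c * swapCoeff c = 1 :=
    fun c => by
      unfold symCoeff swapCoeff
      split_ifs
      · simp
      · rw [hr]; norm_num
      · rw [neg_mul_neg, hr]; norm_num
  have hcross : ∀ c : Fin n × Fin n,
      symCoeff c.swap * swapCoeff c + swapCoeff c.swap * symCoeff c = 0 := fun c => by
    obtain ⟨x, y⟩ := c
    rcases lt_trichotomy x y with h | rfl | h
    · simp [symCoeff, swapCoeff, h, h.ne, h.ne', h.not_gt]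
    · simp [symCoeff, swapCoeff]
    · simp [symCoeff, swapCoeff, h, h.ne, h.ne', h.not_gt]
  ext c d
  have : ((symBasisMatrix n)ᴴ * symBasisMatrix n) c d =
      (if c = d then symCoeff c * symCoeff d + swapCoeff c * swapCoeff d else 0) +
        if c = d.swap then symCoeff c * swapCoeff d + swapCoeff c * symCoeff d else 0 := by
    have hswap : c.swap = d ↔ c = d.swap := by
      rw [← Prod.swap_inj, Prod.swap_swap]
    simp only [mul_apply, conjTranspose_apply, symBasisMatrix, of_apply, star_add, apply_ite star,
      star_zero, hs1, hs2, add_mul, mul_add, Finset.sum_add_distrib, ite_mul, zero_mul,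
      Finset.sum_ite_eq', Finset.mem_univ, if_true, Prod.swap_inj, mul_ite, mul_zero]
    have hl : d.swap = c ↔ c = d.swap := eq_comm
    have hr : d = c.swap ↔ c = d.swap := by rw [← hswap, eq_comm]
    simp only [hl, hr, eq_comm (a := d) (b := c)]
    split_ifs <;> ring
  rw [this, one_apply]
  have h2 : (if c = d.swap then symCoeff c * swapCoeff d + swapCoeff c * symCoeff d else 0) =
      (0 : ℂ) := by
    split_ifs with h
    · rw [h, hcross]
    · rfl
  rw [h2, add_zero]
  split_ifs with h
  · rw [h, hsq]
  · rfl

theorem symBasisMatrix_swap_apply (n : ℕ) (p c : Fin n × Fin n) :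
    symBasisMatrix n p.swap c = if c.1 ≤ c.2 then symBasisMatrix n p c else
      -symBasisMatrix n p c := by
  have hswap : p.swap = c ↔ p = c.swap := by
    rw [← Prod.swap_inj, Prod.swap_swap]
  obtain ⟨x, y⟩ := c
  simp only [symBasisMatrix, of_apply, Prod.swap_inj, hswap]
  rcases lt_trichotomy x y with h | rfl | h
  · simp [symCoeff, swapCoeff, h, h.ne, h.le, add_comm]
  · simp [symCoeff, swapCoeff]
  · simp only [symCoeff, swapCoeff, h.ne', h.not_gt, h.not_ge, if_false]
    split_ifs <;> simp

theorem trace_signature (a b : ℕ) : trace (signature a b) = (a : ℂ) - b := by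
  simp [signature, trace, sub_eq_add_neg]

theorem trace_swapMatrix (n : ℕ) : trace (swapMatrix (Fin n)) = (n : ℂ) := by
  have : ∀ x y : Fin n, (((y, x) : Fin n × Fin n) = (x, y)) ↔ y = x := fun x y => by
    simp only [Prod.mk.injEq]
    exact ⟨fun h => h.1, fun h => ⟨h, h.symm⟩⟩
  simp only [trace, swapMatrix, diag_apply, submatrix_apply, id_eq, one_apply,
    Fintype.sum_prod_type, Prod.swap_prod_mk, this]
  simp

theorem exists_swapMatrix_mul_eq_mul_signature (n : ℕ) :
    ∃ a b : ℕ, a * a + b * b = (n ^ 4 + n ^ 2) / 2 ∧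
      ∃ Q : Matrix (Fin n × Fin n) (Fin a ⊕ Fin b) ℂ,
        Qᴴ * Q = 1 ∧ Q * Qᴴ = 1 ∧ swapMatrix (Fin n) * Q = Q * signature a b := by
  let P : Fin n × Fin n → Prop := fun c => c.1 ≤ c.2
  obtain ⟨a, b, e, hel, her⟩ : ∃ (a b : ℕ) (e : Fin a ⊕ Fin b ≃ Fin n × Fin n),
      (∀ i, (e (Sum.inl i)).1 ≤ (e (Sum.inl i)).2) ∧
        ∀ i, ¬(e (Sum.inr i)).1 ≤ (e (Sum.inr i)).2 :=
    ⟨_, _, (Equiv.sumCongr (Fintype.equivFin _).symm (Fintype.equivFin _).symm).trans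
      (Equiv.sumCompl P), fun i => ((Fintype.equivFin {c // P c}).symm i).2,
      fun i => ((Fintype.equivFin {c // ¬P c}).symm i).2⟩
  have hcard := Fintype.card_congr e
  let Q : Matrix (Fin n × Fin n) (Fin a ⊕ Fin b) ℂ := (symBasisMatrix n).submatrix id e
  have h1 : Qᴴ * Q = 1 := by
    have h := submatrix_mul (symBasisMatrix n)ᴴ (symBasisMatrix n) e id e Function.bijective_id
    rw [symBasisMatrix_conjTranspose_mul, submatrix_one_equiv] at h
    simpa [Q, conjTranspose_submatrix] using h.symm
  have h2 : Q * Qᴴ = 1 := by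
    have h := submatrix_mul (symBasisMatrix n) (symBasisMatrix n)ᴴ id e id e.bijective
    rw [mul_eq_one_comm.1 (symBasisMatrix_conjTranspose_mul n), submatrix_id_id] at h
    simpa [Q, conjTranspose_submatrix] using h.symm
  have h3 : swapMatrix (Fin n) * Q = Q * signature a b := by
    have hl : swapMatrix (Fin n) * Q = Q.submatrix Prod.swap id :=
      one_submatrix_mul Prod.swap (Equiv.refl _) Q
    rw [hl]
    ext p (s | s)
    · simp [Q, symBasisMatrix_swap_apply, hel, mul_apply, signature, one_apply]
    · simp [Q, symBasisMatrix_swap_apply, her, mul_apply, signature, one_apply]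
  refine ⟨a, b, ?_, Q, h1, h2, h3⟩
  have htr : (a : ℂ) = b + n := by
    have h4 : swapMatrix (Fin n) = Q * (signature a b * Qᴴ) := by
      rw [← Matrix.mul_assoc, ← h3, Matrix.mul_assoc, h2, Matrix.mul_one]
    have h5 := congrArg trace h4
    rw [trace_mul_comm, Matrix.mul_assoc, h1, Matrix.mul_one, trace_signature,
      trace_swapMatrix] at h5
    linear_combination -h5
  have ha : a = b + n := by exact_mod_cast htr
  simp only [Fintype.card_sum, Fintype.card_prod, Fintype.card_fin] at hcard
  have : n ^ 4 + n ^ 2 = 2 * (a * a + b * b) := by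
    have h4 : n ^ 4 = (a + b) * (a + b) := by rw [hcard]; ring
    rw [h4, ha]
    ring
  rw [this, Nat.mul_div_cancel_left _ two_pos]

section Commutant

variable {ι : Type*} [Fintype ι] [DecidableEq ι]

/-- The matrix of a permutation. -/
def permMat (σ : Equiv.Perm ι) : Matrix ι ι ℂ := (1 : Matrix ι ι ℂ).submatrix σ id

theorem permMat_kronecker_permMat {ι : Type*} [DecidableEq ι] (σ τ : Equiv.Perm ι) :
    permMat σ ⊗ₖ permMat τ = permMat (Equiv.prodCongr σ τ) := by
  ext p q
  simp [permMat, Matrix.one_apply, Prod.ext_iff, ← ite_and, and_comm]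

theorem permMat_mul (σ : Equiv.Perm ι) (M : Matrix ι ι ℂ) :
    permMat σ * M = M.submatrix σ id :=
  one_submatrix_mul σ (Equiv.refl ι) M

theorem mul_permMat (σ : Equiv.Perm ι) (M : Matrix ι ι ℂ) :
    M * permMat σ = M.submatrix id σ.symm :=
  mul_submatrix_one σ id M

theorem conjTranspose_permMat {ι : Type*} [DecidableEq ι] (σ : Equiv.Perm ι) :
    (permMat σ)ᴴ = permMat σ.symm := by
  ext i j
  simp [permMat, Matrix.one_apply, apply_ite star, Equiv.eq_symm_apply, eq_comm]

theorem permMat_mul_conjTranspose (σ : Equiv.Perm ι) : permMat σ * (permMat σ)ᴴ = 1 := by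
  rw [permMat_mul, conjTranspose_permMat, permMat, submatrix_submatrix]
  ext i j
  simp [Matrix.one_apply]

variable {M : Matrix (ι × ι) (ι × ι) ℂ}

theorem apply_perm_of_commute
    (hM : ∀ V : Matrix ι ι ℂ, V * Vᴴ = 1 → (V ⊗ₖ V) * M = M * (V ⊗ₖ V))
    (σ : Equiv.Perm ι) (x y z w : ι) : M (σ x, σ y) (σ z, σ w) = M (x, y) (z, w) := by
  have h := hM (permMat σ) (permMat_mul_conjTranspose σ)
  rw [permMat_kronecker_permMat, permMat_mul, mul_permMat] at h
  simpa using congrFun (congrFun h (x, y)) (σ z, σ w)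

theorem apply_eq_zero_of_commute
    (hM : ∀ V : Matrix ι ι ℂ, V * Vᴴ = 1 → (V ⊗ₖ V) * M = M * (V ⊗ₖ V))
    {p q : ι × ι} (h1 : p ≠ q) (h2 : p.swap ≠ q) : M p q = 0 := by
  by_contra hne
  have key : ∀ x : ι, (if p.1 = x then Complex.I else 1) * (if p.2 = x then Complex.I else 1) =
      (if q.1 = x then Complex.I else 1) * (if q.2 = x then Complex.I else 1) := fun x => by
    have h := hM (diagonal fun i => if i = x then Complex.I else 1) (by
      rw [diagonal_conjTranspose, diagonal_mul_diagonal, ← diagonal_one]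
      congr 1
      ext i
      by_cases hi : i = x <;> simp [hi])
    rw [diagonal_kronecker_diagonal] at h
    have h := congrFun (congrFun h p) q
    rw [diagonal_mul, mul_diagonal, mul_comm] at h
    exact mul_left_cancel₀ hne h
  obtain ⟨x, y⟩ := p
  obtain ⟨z, w⟩ := q
  have hI : Complex.I ≠ 1 := fun h => by simpa using congrArg Complex.re h
  have hI' : (-1 : ℂ) ≠ 1 := by norm_num
  have hI'' : (-1 : ℂ) ≠ Complex.I := fun h => by simpa using congrArg Complex.re h
  have hx := key x
  have hy := key y
  simp only [ne_eq, Prod.mk.injEq, Prod.swap_prod_mk, not_and] at h1 h2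
  simp only [if_true] at hx hy
  by_cases hzx : z = x
  · subst hzx
    have hyw : ¬w = y := fun h => h1 rfl h.symm
    simp only [hyw, if_false, mul_one] at hy
    split_ifs at hy <;> simp_all
  · by_cases hwx : w = x
    · subst hwx
      have hyz : ¬z = y := fun h => h2 h.symm rfl
      simp only [hyz, if_false, one_mul] at hy
      split_ifs at hy <;> simp_all
    · simp only [hzx, hwx, if_false] at hx
      split_ifs at hx <;> simp_all

theorem apply_diag_of_commute
    (hM : ∀ V : Matrix ι ι ℂ, V * Vᴴ = 1 → (V ⊗ₖ V) * M = M * (V ⊗ₖ V))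
    {x y : ι} (hxy : x ≠ y) : M (x, x) (x, x) = M (x, y) (x, y) + M (x, y) (y, x) := by
  let τ := Equiv.swap x y
  have hstar : (permMat τ)ᴴ = permMat τ := by rw [conjTranspose_permMat, Equiv.symm_swap]
  have hτ : permMat τ * permMat τ = 1 := by
    have := permMat_mul_conjTranspose τ
    rwa [hstar] at this
  let r : ℂ := ((Real.sqrt 2)⁻¹ : ℝ)
  have hr : r * r = 1 / 2 := by
    rw [← Complex.ofReal_mul, ← mul_inv, Real.mul_self_sqrt (by norm_num)]
    norm_num
  have hrs : star r = r := Complex.conj_ofReal _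
  have hC := hM (r • (1 + Complex.I • permMat τ)) (by
    rw [conjTranspose_smul, conjTranspose_add, conjTranspose_smul, hstar, hrs, smul_mul_smul_comm,
      hr, conjTranspose_one, add_mul, mul_add, mul_add, smul_mul_smul_comm, hτ, RCLike.star_def,
      Complex.conj_I, mul_neg, Complex.I_mul_I, Matrix.one_mul, Matrix.one_mul, Matrix.mul_one]
    module)
  have hperm := hM (permMat τ) (by rw [hstar, hτ])
  have hexp : (r • (1 + Complex.I • permMat τ)) ⊗ₖ (r • (1 + Complex.I • permMat τ)) =
      (1 / 2 : ℂ) • (1 + Complex.I • (permMat τ ⊗ₖ permMat 1 + permMat 1 ⊗ₖ permMat τ) -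
        permMat τ ⊗ₖ permMat τ) := by
    have h1 : permMat (1 : Equiv.Perm ι) = 1 := submatrix_id_id _
    rw [smul_kronecker, kronecker_smul, smul_smul, hr, add_kronecker, kronecker_add, kronecker_add,
      smul_kronecker, kronecker_smul, smul_kronecker, kronecker_smul, one_kronecker_one, h1,
      smul_smul, Complex.I_mul_I]
    module
  rw [hexp, smul_mul_assoc, mul_smul_comm, sub_mul, mul_sub, hperm, add_mul, mul_add,
    Matrix.one_mul, Matrix.mul_one, smul_mul_assoc, mul_smul_comm] at hC
  have hC := smul_right_injective _ (by norm_num : (1 / 2 : ℂ) ≠ 0) hC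
  have hC := smul_right_injective _ Complex.I_ne_zero (add_left_cancel (sub_left_inj.1 hC))
  rw [add_mul, mul_add, permMat_kronecker_permMat, permMat_kronecker_permMat, permMat_mul,
    permMat_mul, mul_permMat, mul_permMat] at hC
  have h := congrFun (congrFun hC (x, x)) (x, y)
  have h0 : M (x, x) (y, y) = 0 := apply_eq_zero_of_commute hM (by simp [hxy]) (by simp [hxy])
  have h2 := apply_perm_of_commute hM τ x y y x
  simp only [Matrix.add_apply, submatrix_apply, Equiv.prodCongr_apply, Prod.map_apply, id_eq,
    Equiv.prodCongr_symm, Equiv.Perm.one_apply, show Equiv.symm (1 : Equiv.Perm ι) = 1 from rfl,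
    τ, Equiv.symm_swap, Equiv.swap_apply_left, Equiv.swap_apply_right, h0] at h h2
  linear_combination -h + h2

theorem exists_eq_smul_one_add_smul_swapMatrix
    (hM : ∀ V : Matrix ι ι ℂ, V * Vᴴ = 1 → (V ⊗ₖ V) * M = M * (V ⊗ₖ V)) :
    ∃ α β : ℂ, M = α • (1 : Matrix (ι × ι) (ι × ι) ℂ) + β • swapMatrix ι := by
  rcases subsingleton_or_nontrivial ι with hι | ⟨x, y, hxy⟩
  · refine ⟨trace M, 0, ?_⟩
    ext p q
    obtain rfl := Subsingleton.elim p q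
    rw [trace, Fintype.sum_subsingleton _ p]
    simp
  refine ⟨M (x, y) (x, y), M (x, y) (y, x), ?_⟩
  have htrans : ∀ z w : ι, z ≠ w → ∃ σ : Equiv.Perm ι, σ x = z ∧ σ y = w := fun z w hzw => by
    have hne : z ≠ Equiv.swap x z y := fun h => hxy <| by
      rw [← Equiv.swap_apply_left x z] at h
      exact (Equiv.swap x z).injective (by simpa using h)
    exact ⟨(Equiv.swap x z).trans (Equiv.swap (Equiv.swap x z y) w),
      by simp [Equiv.swap_apply_of_ne_of_ne hne hzw], by simp⟩
  have hoff : ∀ z w : ι, z ≠ w →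
      M (z, w) (z, w) = M (x, y) (x, y) ∧ M (z, w) (w, z) = M (x, y) (y, x) := fun z w hzw => by
    obtain ⟨σ, rfl, rfl⟩ := htrans z w hzw
    exact ⟨apply_perm_of_commute hM σ x y x y, apply_perm_of_commute hM σ x y y x⟩
  have hdiag : ∀ z : ι, M (z, z) (z, z) = M (x, y) (x, y) + M (x, y) (y, x) := fun z => by
    obtain ⟨w, hw⟩ : ∃ w, z ≠ w := by
      by_cases h : z = x
      · exact ⟨y, h ▸ hxy⟩
      · exact ⟨x, h⟩
    rw [apply_diag_of_commute hM hw, (hoff z w hw).1, (hoff z w hw).2]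
  ext p q
  simp only [Matrix.add_apply, Matrix.smul_apply, swapMatrix, submatrix_apply, Matrix.one_apply,
    id_eq, smul_eq_mul]
  by_cases h1 : p = q
  · subst h1
    obtain ⟨z, w⟩ := p
    by_cases hzw : z = w
    · subst hzw
      simp [hdiag]
    · simp [hoff z w hzw, Ne.symm hzw]
  by_cases h2 : p.swap = q
  · subst h2
    obtain ⟨z, w⟩ := p
    have hzw : z ≠ w := fun h => h1 (by simp [h])
    simp [hoff z w hzw, hzw]
  · simp [h1, h2, apply_eq_zero_of_commute hM h1 h2]

end Commutant

theorem exists_unitary_commute_swapMatrix {n : ℕ} (hn : 0 < n) :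
    ∃ W : Fin ((n ^ 4 + n ^ 2) / 2) → Matrix (Fin n × Fin n) (Fin n × Fin n) ℂ,
      (∀ k, W k * (W k)ᴴ = 1) ∧ (∀ k, W k * swapMatrix (Fin n) = swapMatrix (Fin n) * W k) ∧
      ∀ X Y : Matrix (Fin n × Fin n) (Fin n × Fin n) ℂ, trace X = trace Y →
        trace (swapMatrix (Fin n) * X) = trace (swapMatrix (Fin n) * Y) →
        ∑ k, W k * X * (W k)ᴴ = ∑ k, W k * Y * (W k)ᴴ := by
  obtain ⟨a, b, hab, Q, hQ1, hQ2, hSQ⟩ := exists_swapMatrix_mul_eq_mul_signature n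
  have hN0 : (n ^ 4 + n ^ 2) / 2 ≠ 0 := by
    have h4 : 0 < n ^ 4 := by positivity
    have h2 : 0 < n ^ 2 := by positivity
    omega
  obtain ⟨W, hW, hWs, hWtr⟩ := exists_unitary_commute_signature hab hN0
  have hS : swapMatrix (Fin n) = Q * signature a b * Qᴴ := by
    rw [← hSQ, Matrix.mul_assoc, hQ2, Matrix.mul_one]
  have hcancel : ∀ A : Matrix (Fin a ⊕ Fin b) (Fin n × Fin n) ℂ, Qᴴ * (Q * A) = A := fun A => by
    rw [← Matrix.mul_assoc, hQ1, Matrix.one_mul]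
  have hsum : ∀ X : Matrix (Fin n × Fin n) (Fin n × Fin n) ℂ,
      ∑ k, (Q * W k * Qᴴ) * X * (Q * W k * Qᴴ)ᴴ =
      Q * (∑ k, W k * (Qᴴ * X * Q) * (W k)ᴴ) * Qᴴ := fun X => by
    rw [Matrix.mul_sum, Matrix.sum_mul]
    refine Finset.sum_congr rfl fun k _ => ?_
    simp only [conjTranspose_mul, conjTranspose_conjTranspose, Matrix.mul_assoc]
  have htr : ∀ X : Matrix (Fin n × Fin n) (Fin n × Fin n) ℂ,
      trace (Qᴴ * X * Q) = trace X := fun X => by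
    rw [trace_mul_comm, ← Matrix.mul_assoc, hQ2, Matrix.one_mul]
  have hstr : ∀ X : Matrix (Fin n × Fin n) (Fin n × Fin n) ℂ,
      trace (signature a b * (Qᴴ * X * Q)) = trace (swapMatrix (Fin n) * X) :=
    fun X => by
      rw [hS, ← Matrix.mul_assoc, trace_mul_comm]
      simp only [Matrix.mul_assoc]
  refine ⟨fun k => Q * W k * Qᴴ, fun k => ?_, fun k => ?_, fun X Y hXY hs => ?_⟩
  · simp only [conjTranspose_mul, conjTranspose_conjTranspose, Matrix.mul_assoc, hcancel]
    rw [← Matrix.mul_assoc (W k), hW, Matrix.one_mul, hQ2]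
  · rw [hS]
    simp only [Matrix.mul_assoc, hcancel]
    rw [← Matrix.mul_assoc (W k), hWs, Matrix.mul_assoc]
  · rw [hsum, hsum, hWtr (Qᴴ * X * Q) (Qᴴ * Y * Q) (by rw [htr, htr, hXY])
      (by rw [hstr, hstr, hs])]

theorem integral_linearMap_apply {α ι : Type*} [Fintype ι] [DecidableEq ι] [MeasurableSpace α]
    {μ : Measure α} {f : α → Matrix ι ι ℂ} (hf : ∀ i j, Integrable (fun a => f a i j) μ)
    (L : Matrix ι ι ℂ →ₗ[ℂ] ℂ) :
    ∫ a, L (f a) ∂μ = L (of fun i j => ∫ a, f a i j ∂μ) := by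
  have hL : ∀ A : Matrix ι ι ℂ, L A = ∑ i, ∑ j, A i j * L (single i j 1) := fun A => by
    conv_lhs => rw [matrix_eq_sum_single A]
    simp only [map_sum]
    refine Finset.sum_congr rfl fun i _ => Finset.sum_congr rfl fun j _ => ?_
    rw [← smul_eq_mul, ← map_smul, smul_single, smul_eq_mul, mul_one]
  rw [hL]
  simp only [hL (f _), of_apply]
  rw [integral_finsetSum _ fun i _ => integrable_finsetSum _ fun j _ => (hf i j).mul_const _]
  refine Finset.sum_congr rfl fun i _ => ?_
  rw [integral_finsetSum _ fun j _ => (hf i j).mul_const _]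
  exact Finset.sum_congr rfl fun j _ => integral_mul_const _ _

section Twirl

variable {n : ℕ}

/-- The conjugation of `X` by `U ⊗ U`. -/
noncomputable def kroneckerConj (X : Matrix (Fin n × Fin n) (Fin n × Fin n) ℂ)
    (U : Matrix (Fin n) (Fin n) ℂ) : Matrix (Fin n × Fin n) (Fin n × Fin n) ℂ :=
  (U ⊗ₖ U) * X * (U ⊗ₖ U)ᴴ

theorem kroneckerConj_mul (X : Matrix (Fin n × Fin n) (Fin n × Fin n) ℂ)
    (V U : Matrix (Fin n) (Fin n) ℂ) :
    kroneckerConj X (V * U) = (V ⊗ₖ V) * kroneckerConj X U * (V ⊗ₖ V)ᴴ := by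
  simp only [kroneckerConj, mul_kronecker_mul, conjTranspose_mul, Matrix.mul_assoc]

theorem kronecker_self_mul_conjTranspose {U : Matrix (Fin n) (Fin n) ℂ} (hU : U * Uᴴ = 1) :
    (U ⊗ₖ U) * (U ⊗ₖ U)ᴴ = 1 := by
  rw [conjTranspose_kronecker, ← mul_kronecker_mul, hU, one_kronecker_one]

theorem swapMatrix_mul_kronecker_self (U : Matrix (Fin n) (Fin n) ℂ) :
    swapMatrix (Fin n) * (U ⊗ₖ U) = (U ⊗ₖ U) * swapMatrix (Fin n) := by
  have h1 : swapMatrix (Fin n) * (U ⊗ₖ U) = (U ⊗ₖ U).submatrix Prod.swap id :=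
    one_submatrix_mul Prod.swap (Equiv.refl _) _
  have h2 : (U ⊗ₖ U) * swapMatrix (Fin n) = (U ⊗ₖ U).submatrix id Prod.swap :=
    mul_submatrix_one (Equiv.prodComm (Fin n) (Fin n)) id _
  rw [h1, h2]
  ext p q
  simp [mul_comm]

theorem trace_kroneckerConj (X : Matrix (Fin n × Fin n) (Fin n × Fin n) ℂ)
    {U : Matrix (Fin n) (Fin n) ℂ} (hU : U * Uᴴ = 1) : trace (kroneckerConj X U) = trace X := by
  rw [kroneckerConj, trace_mul_comm, ← Matrix.mul_assoc,
    mul_eq_one_comm.1 (kronecker_self_mul_conjTranspose hU), Matrix.one_mul]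

theorem trace_swapMatrix_mul_kroneckerConj (X : Matrix (Fin n × Fin n) (Fin n × Fin n) ℂ)
    {U : Matrix (Fin n) (Fin n) ℂ} (hU : U * Uᴴ = 1) :
    trace (swapMatrix (Fin n) * kroneckerConj X U) = trace (swapMatrix (Fin n) * X) := by
  rw [← trace_kroneckerConj (swapMatrix (Fin n) * X) hU]
  simp only [kroneckerConj]
  rw [← Matrix.mul_assoc, ← Matrix.mul_assoc, swapMatrix_mul_kronecker_self, Matrix.mul_assoc _ _ X]

variable [MeasurableSpace (Matrix.unitaryGroup (Fin n) ℂ)]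
  [BorelSpace (Matrix.unitaryGroup (Fin n) ℂ)]

theorem integrable_kroneckerConj_apply (μ : Measure (Matrix.unitaryGroup (Fin n) ℂ))
    [IsFiniteMeasure μ] (X : Matrix (Fin n × Fin n) (Fin n × Fin n) ℂ) (i j : Fin n × Fin n) :
    Integrable (fun U : Matrix.unitaryGroup (Fin n) ℂ =>
      kroneckerConj X (U : Matrix (Fin n) (Fin n) ℂ) i j) μ := by
  have hexp : ∀ U : Matrix (Fin n) (Fin n) ℂ, kroneckerConj X U i j =
      ∑ q, (∑ p, U i.1 p.1 * U i.2 p.2 * X p q) * star (U j.1 q.1 * U j.2 q.2) := fun U => by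
    simp only [kroneckerConj, mul_apply, conjTranspose_apply, kroneckerMap_apply]
  have hcont : ∀ x y, Continuous fun U : Matrix.unitaryGroup (Fin n) ℂ =>
      (U : Matrix (Fin n) (Fin n) ℂ) x y := fun x y =>
    continuous_subtype_val.matrix_elem x y
  have hbound : ∀ (U : Matrix.unitaryGroup (Fin n) ℂ) x y,
      ‖(U : Matrix (Fin n) (Fin n) ℂ) x y‖ ≤ 1 := fun U x y => entry_norm_bound_of_unitary U.2 x y
  have hbound2 : ∀ (U : Matrix.unitaryGroup (Fin n) ℂ) x y z w,
      ‖(U : Matrix (Fin n) (Fin n) ℂ) x y * (U : Matrix (Fin n) (Fin n) ℂ) z w‖ ≤ 1 :=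
    fun U x y z w => by
      rw [norm_mul]
      exact mul_le_one₀ (hbound U x y) (norm_nonneg _) (hbound U z w)
  simp only [hexp]
  refine integrable_finsetSum _ fun q _ => ?_
  simp only [Finset.sum_mul]
  refine integrable_finsetSum _ fun p _ => Integrable.of_bound (C := ‖X p q‖) ?_ ?_
  · refine Continuous.aestronglyMeasurable ?_
    have h1 := hcont i.1 p.1
    have h2 := hcont i.2 p.2
    have h3 := hcont j.1 q.1
    have h4 := hcont j.2 q.2
    exact ((h1.mul h2).mul continuous_const).mul (continuous_star.comp (h3.mul h4))
  · refine Filter.Eventually.of_forall fun U => ?_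
    rw [norm_mul, norm_mul, norm_star]
    calc _ ≤ 1 * ‖X p q‖ * 1 := by gcongr <;> exact hbound2 U _ _ _ _
      _ = ‖X p q‖ := by ring

/-- The average of `X` over all conjugations by `U ⊗ U`. -/
noncomputable def twirl (μ : Measure (Matrix.unitaryGroup (Fin n) ℂ))
    (X : Matrix (Fin n × Fin n) (Fin n × Fin n) ℂ) : Matrix (Fin n × Fin n) (Fin n × Fin n) ℂ :=
  of fun i j => ∫ U : Matrix.unitaryGroup (Fin n) ℂ,
    kroneckerConj X (U : Matrix (Fin n) (Fin n) ℂ) i j ∂μ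

/-- The linear functional `Y ↦ (A * Y * B) i j`. -/
def mulMulEntry {ι : Type*} [Fintype ι] (A B : Matrix ι ι ℂ) (i j : ι) : Matrix ι ι ℂ →ₗ[ℂ] ℂ where
  toFun Y := (A * Y * B) i j
  map_add' Y Z := by rw [Matrix.mul_add, Matrix.add_mul, Matrix.add_apply]
  map_smul' c Y := by rw [Matrix.mul_smul, Matrix.smul_mul, Matrix.smul_apply, RingHom.id_apply]

theorem twirl_commute (μ : Measure (Matrix.unitaryGroup (Fin n) ℂ)) [IsFiniteMeasure μ]
    [μ.IsMulLeftInvariant] (X : Matrix (Fin n × Fin n) (Fin n × Fin n) ℂ)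
    {V : Matrix (Fin n) (Fin n) ℂ} (hV : V * Vᴴ = 1) :
    (V ⊗ₖ V) * twirl μ X = twirl μ X * (V ⊗ₖ V) := by
  have hinv : (V ⊗ₖ V) * twirl μ X * (V ⊗ₖ V)ᴴ = twirl μ X := by
    ext i j
    have h := integral_linearMap_apply (integrable_kroneckerConj_apply μ X)
      (mulMulEntry (V ⊗ₖ V) (V ⊗ₖ V)ᴴ i j)
    refine h.symm.trans ?_
    let g : Matrix.unitaryGroup (Fin n) ℂ := ⟨V, mem_unitaryGroup_iff.2 hV⟩
    have hg := integral_mul_left_eq_self (μ := μ) (fun U : Matrix.unitaryGroup (Fin n) ℂ =>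
      kroneckerConj X (U : Matrix (Fin n) (Fin n) ℂ) i j) g
    refine Eq.trans (integral_congr_ae (Filter.Eventually.of_forall fun U => ?_)) hg
    exact (congrFun (congrFun (kroneckerConj_mul X V U) i) j).symm
  conv_rhs => rw [← hinv]
  rw [Matrix.mul_assoc _ (V ⊗ₖ V)ᴴ, mul_eq_one_comm.1 (kronecker_self_mul_conjTranspose hV),
    Matrix.mul_one]

end Twirl

/-- The Werner twirling channel admits a mixed-unitary decomposition
as a uniform average of `N = (n⁴ + n²)/2` unitary conjugations. -/
theorem stmt_18 (n : ℕ) (hn : 0 < n)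
    [MeasurableSpace (Matrix.unitaryGroup (Fin n) ℂ)]
    [BorelSpace (Matrix.unitaryGroup (Fin n) ℂ)]
    (μ : Measure (Matrix.unitaryGroup (Fin n) ℂ))
    [μ.IsHaarMeasure] [IsProbabilityMeasure μ] :
    ∃ W : Fin ((n ^ 4 + n ^ 2) / 2) → Matrix (Fin n × Fin n) (Fin n × Fin n) ℂ,
      (∀ k, (W k)ᴴ * W k = 1 ∧ W k * (W k)ᴴ = 1) ∧
      ∀ (X : Matrix (Fin n × Fin n) (Fin n × Fin n) ℂ) (i j : Fin n × Fin n),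
        (∫ U : Matrix.unitaryGroup (Fin n) ℂ,
          (((U : Matrix (Fin n) (Fin n) ℂ) ⊗ₖ (U : Matrix (Fin n) (Fin n) ℂ)) * X *
            ((U : Matrix (Fin n) (Fin n) ℂ) ⊗ₖ (U : Matrix (Fin n) (Fin n) ℂ))ᴴ) i j ∂μ) =
        ((1 / ((((n ^ 4 + n ^ 2) / 2 : ℕ)) : ℂ)) • ∑ k, W k * X * (W k)ᴴ) i j := by
  obtain ⟨W, hW, hWS, hWtr⟩ := exists_unitary_commute_swapMatrix hn
  refine ⟨W, fun k => ⟨mul_eq_one_comm.1 (hW k), hW k⟩, fun X i j => ?_⟩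
  change twirl μ X i j = _
  have hN0 : (((n ^ 4 + n ^ 2) / 2 : ℕ) : ℂ) ≠ 0 := by
    have h4 : 0 < n ^ 4 := by positivity
    have h2 : 0 < n ^ 2 := by positivity
    exact_mod_cast (by omega : (n ^ 4 + n ^ 2) / 2 ≠ 0)
  obtain ⟨α, β, hαβ⟩ := exists_eq_smul_one_add_smul_swapMatrix fun V hV => twirl_commute μ X hV
  have hfix : ∀ k, W k * twirl μ X * (W k)ᴴ = twirl μ X := fun k => by
    have hcomm : W k * twirl μ X = twirl μ X * W k := by
      rw [hαβ, Matrix.mul_add, Matrix.add_mul, Matrix.mul_smul, Matrix.mul_smul, Matrix.smul_mul,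
        Matrix.smul_mul, hWS, Matrix.mul_one, Matrix.one_mul]
    rw [hcomm, Matrix.mul_assoc, hW, Matrix.mul_one]
  have hsum : ∑ k, W k * twirl μ X * (W k)ᴴ = ∑ k, W k * X * (W k)ᴴ := by
    ext p q
    have h := integral_linearMap_apply (integrable_kroneckerConj_apply μ X)
      (∑ k, mulMulEntry (W k) (W k)ᴴ p q)
    have happ : ∀ Y, (∑ k, mulMulEntry (W k) (W k)ᴴ p q) Y = (∑ k, W k * Y * (W k)ᴴ) p q :=
      fun Y => by
        rw [LinearMap.sum_apply, Matrix.sum_apply]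
        rfl
    simp only [happ] at h
    refine h.symm.trans ?_
    have hconst : ∀ U : Matrix.unitaryGroup (Fin n) ℂ,
        ∑ k, W k * kroneckerConj X (U : Matrix (Fin n) (Fin n) ℂ) * (W k)ᴴ =
          ∑ k, W k * X * (W k)ᴴ := fun U => by
      have hU := mem_unitaryGroup_iff.1 U.2
      exact hWtr _ _ (trace_kroneckerConj X hU) (trace_swapMatrix_mul_kroneckerConj X hU)
    simp only [hconst, integral_const, probReal_univ, one_smul]
  rw [← hsum, Finset.sum_congr rfl fun k _ => hfix k, Finset.sum_const, Finset.card_univ,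
    Fintype.card_fin, ← Nat.cast_smul_eq_nsmul ℂ, smul_smul, one_div, inv_mul_cancel₀ hN0, one_smul]
end
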